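/- (Wu–Zhang) Let k be a field and let H be a noetherian affine Hopf algebra over k satisfying a polynomial identity. Suppose that H is involutory (S² = Id), that H is semiprime, and that H has no finite-dimensional irreducible module whose dimension is divisible by the characteristic of k. Then H is regular, i.e., H has finite global dimension. -/

import Mathlib

open CategoryTheory

universe w v u u' u2

/-!
STATEMENT 19 (Wu–Zhang):
Let `H` be a noetherian affine Hopf algebra over a field `k` satisfying a polynomial
identity.  If `H` is involutory (`S² = Id`), semiprime, and has no finite-dimensional
irreducible module whose dimension is divisible by the characteristic of `k`, then
`H` is regular, i.e. has finite global dimension.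
-/

/-! ### Ext groups over an arbitrary ring -/

instance hasExtModuleCat (R : Type u) [Ring R] :
    HasExt.{max u (v + 1)} (ModuleCat.{v} R) :=
  letI := HasDerivedCategory.standard (ModuleCat.{v} R)
  hasExt_of_hasDerivedCategory _

/-- The canonical map `(X ⟶ Y) → Ext X Y 0` is additive. -/
lemma Ext_mk₀_add {C : Type*} [Category C] [Abelian C] [HasExt.{w} C] {X Y : C}
    (f g : X ⟶ Y) :
    Abelian.Ext.mk₀ (f + g) = Abelian.Ext.mk₀ f + Abelian.Ext.mk₀ g := by
  letI := HasDerivedCategory.standard C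
  ext
  rw [Abelian.Ext.add_hom, Abelian.Ext.mk₀_hom, Abelian.Ext.mk₀_hom, Abelian.Ext.mk₀_hom,
    Functor.map_add]
  dsimp [ShiftedHom.mk₀]
  rw [Preadditive.add_comp]

/-- The Ext-group `Ext_A^i (M, N)` for two left `A`-modules `M` and `N`. -/
noncomputable abbrev ExtGroup (A : Type u) [Ring A]
    (M : Type v) [AddCommGroup M] [Module A M]
    (N : Type w) [AddCommGroup N] [Module A N] (i : ℕ) :=
  Abelian.Ext (C := ModuleCat.{max v w u} A)
    (ModuleCat.of A (ULift.{max w u} M)) (ModuleCat.of A (ULift.{max v u} N)) i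


/-- A ring has finite global dimension if there is a uniform bound above which all
Ext-groups vanish. -/
def HasFiniteGlobalDimension (A : Type u) [Ring A] : Prop :=
  ∃ n : ℕ, ∀ (M N : Type u) [AddCommGroup M] [Module A M] [AddCommGroup N] [Module A N],
    ∀ i : ℕ, n < i → Subsingleton (ExtGroup A M N i)

/-- An algebra `A` over `k` satisfies a polynomial identity if there is a nonzero
polynomial `f` in finitely many noncommuting variables, with coefficients in `k`,
which vanishes identically on `A`. -/
def SatisfiesPolynomialIdentity (k : Type u') (A : Type u) [CommSemiring k] [Ring A]
    [Algebra k A] : Prop :=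
  ∃ (n : ℕ) (f : FreeAlgebra k (Fin n)), f ≠ 0 ∧
    ∀ v : Fin n → A, FreeAlgebra.lift k v f = 0

/-- A ring is semiprime if it has no nonzero nilpotent two-sided ideals;
equivalently, `a R a = 0` implies `a = 0`. -/
def IsSemiprimeRing (R : Type u) [Ring R] : Prop :=
  ∀ a : R, (∀ x : R, a * x * a = 0) → a = 0

/-!
If `V` is a finite-dimensional `H`-module with `dim V ≠ 0` in `k`, then every `H`-module `X` is a
direct summand of `(V ⊗ V*) ⊗ X`: because `S² = 1`, both the canonical element of `V ⊗ V*` and the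
trace `V ⊗ V* → k` are `H`-invariant, and their composite is multiplication by `dim V`. Since
`V ⊗ (V* ⊗ X)` has a finite resolution as soon as `V` has one, it suffices to find a single
irreducible module `V` of finite projective dimension and of dimension prime to `char k`.

Such a `V` lives over a general point of the centre `Z`. By polynomial identity theory `H` becomes
Azumaya after inverting some `c ∈ Z`, and by an Artin–Tate argument `A = Z[1/c]` is a reduced affine
algebra. The dimensions of the irreducible modules over the maximal ideals of `A` are multiples of
the residue degrees, so no residue degree of `A` is divisible by `char k`. Unless `k` is perfect and
infinite, this forces the components of `Spec A` to be zero-dimensional, because a transcendental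
element takes values of degree divisible by `char k`; if `k` is perfect and infinite, `Spec A` is
generically étale over an affine space. In both cases some localization `C` of `A` has a regular
sequence cutting out a nonempty finite reduced subscheme `Spec D`. Over it `H ⊗ D` is semisimple,
and cutting down by one element of the sequence at a time bounds the projective dimension over `H`
of each of its simple summands.
-/

section PolynomialIdentities

variable {k : Type*} {A : Type*} [Ring A]

lemma freeAlgebra_lift_eq_sum [CommSemiring k] [Algebra k A] {X : Type*} (v : X → A)
    (f : FreeAlgebra k X) :
    FreeAlgebra.lift k v f =
      ∑ u ∈ (FreeAlgebra.equivMonoidAlgebraFreeMonoid f).coeff.support,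
        (FreeAlgebra.equivMonoidAlgebraFreeMonoid f).coeff u • (u.toList.map v).prod := by
  have hlift : FreeAlgebra.lift k v = (MonoidAlgebra.lift k A _ (FreeMonoid.lift v)).comp
      FreeAlgebra.equivMonoidAlgebraFreeMonoid.toAlgHom := by
    ext x
    simp [FreeAlgebra.equivMonoidAlgebraFreeMonoid]
  rw [hlift, AlgHom.comp_apply, MonoidAlgebra.lift_apply]
  exact Finset.sum_congr rfl fun u _ => congrArg _ (FreeMonoid.lift_apply ..)

lemma sum_neg_one_pow_card_disjoint_range {α β : Type*} [Fintype α] [Finite β]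
    (τ : β → α) [Decidable (Function.Surjective τ)]
    [DecidablePred fun U : Finset α => ∀ j, τ j ∉ U] :
    ∑ U : Finset α with ∀ j, τ j ∉ U, (-1 : ℤ) ^ U.card =
      if Function.Surjective τ then 1 else 0 := by
  classical
  have := Fintype.ofFinite β
  have hset : ({U : Finset α | ∀ j, τ j ∉ U} : Finset _) = (Finset.univ.image τ)ᶜ.powerset := by
    ext U
    simp only [Finset.mem_filter_univ, Finset.mem_powerset, Finset.subset_compl_comm (s := U),
      Finset.image_subset_iff, Finset.mem_univ, Finset.mem_compl, true_imp_iff]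
  have hsurj : (Finset.univ.image τ)ᶜ = ∅ ↔ Function.Surjective τ := by
    simp [Finset.eq_univ_iff_forall, Function.Surjective]
  rw [hset, Finset.sum_powerset_neg_one_pow_card, if_congr hsurj rfl rfl]

-- Inclusion–exclusion over the set `U` of omitted variables `y t`.
lemma sum_neg_one_pow_card_smul_prod_letterSums {d m : ℕ} {X : Type*} [DecidableEq X]
    (w : Fin d → X) (u : Fin m → X) (y : Fin d → A)
    [DecidablePred fun τ : Fin m → Fin d => Function.Surjective τ] :
    ∑ U : Finset (Fin d), (-1 : ℤ) ^ U.card •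
        (List.ofFn fun j => ∑ t with t ∉ U ∧ w t = u j, y t).prod =
      ∑ τ : Fin m → Fin d with Function.Surjective τ ∧ w ∘ τ = u, (List.ofFn (y ∘ τ)).prod := by
  have hexpand (U : Finset (Fin d)) :
      (List.ofFn fun j => ∑ t with t ∉ U ∧ w t = u j, y t).prod =
        ∑ τ : Fin m → Fin d with w ∘ τ = u ∧ ∀ j, τ j ∉ U, (List.ofFn (y ∘ τ)).prod := by
    have h := (MultilinearMap.mkPiAlgebraFin ℤ m A).map_sum_finset (fun _ t => y t)
      fun j => ({t | t ∉ U ∧ w t = u j} : Finset _)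
    refine h.trans (Finset.sum_congr (Finset.ext fun τ => ?_) fun _ _ => rfl)
    simp only [Fintype.mem_piFinset, Finset.mem_filter_univ, forall_and, funext_iff,
      Function.comp_apply, and_comm]
  simp_rw [hexpand, Finset.smul_sum]
  rw [Finset.sum_comm' (t' := {τ | w ∘ τ = u}) (s' := fun τ => {U | ∀ j, τ j ∉ U})
    (by simp [and_comm (a := w ∘ _ = u)])]
  simp only [← Finset.sum_smul, sum_neg_one_pow_card_disjoint_range, ite_smul, one_smul, zero_smul]
  rw [← Finset.sum_filter, Finset.filter_filter]
  simp only [and_comm]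

lemma sum_surjective_eq_sum_perm {B X : Type*} [AddCommMonoid B] [DecidableEq X] {d m : ℕ}
    (hmd : m ≤ d) (w : Fin d → X) (u : Fin m → X) (F : List (Fin d) → B)
    [DecidablePred fun τ : Fin m → Fin d => Function.Surjective τ] :
    ∑ τ : Fin m → Fin d with Function.Surjective τ ∧ w ∘ τ = u, F (List.ofFn τ) =
      ∑ σ ∈ {σ : Equiv.Perm (Fin d) | List.ofFn (w ∘ σ) = List.ofFn u}, F (List.ofFn σ) := by
  obtain rfl | hlt := hmd.eq_or_lt
  · refine (Finset.sum_bij' (fun (σ : Equiv.Perm (Fin m)) _ => ⇑σ) (fun τ hτ => Equiv.ofBijective τ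
      (Finite.injective_iff_bijective.1 (Finite.injective_iff_surjective.2
        ((Finset.mem_filter_univ
          (p := fun τ => Function.Surjective τ ∧ w ∘ τ = u) τ).1 hτ).1))) ?_ ?_ ?_ ?_ ?_).symm
    · intro σ hσ
      rw [Finset.mem_filter_univ, List.ofFn_inj] at hσ
      exact (Finset.mem_filter_univ _).2 ⟨σ.surjective, hσ⟩
    · intro τ hτ
      rw [Finset.mem_filter_univ] at hτ
      exact (Finset.mem_filter_univ _).2 (List.ofFn_inj.2 hτ.2)
    · exact fun σ _ => Equiv.ext fun _ => rfl
    · exact fun τ _ => rfl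
    · exact fun σ _ => rfl
  · rw [Finset.filter_eq_empty_iff.2, Finset.filter_eq_empty_iff.2, Finset.sum_empty,
      Finset.sum_empty]
    · intro σ _ h
      simpa [hlt.ne'] using congrArg List.length h
    · intro τ _ h
      simpa [hlt.not_ge] using Fintype.card_le_of_surjective τ h.1

/-- The multilinear polynomial `∑ σ, α σ • X (σ 0) * ⋯ * X (σ (d - 1))`, as a multilinear map on
the algebra `A`. -/
def multilinearPolynomial [CommSemiring k] (A : Type*) [Ring A] [Algebra k A] {d : ℕ}
    (α : Equiv.Perm (Fin d) → k) : MultilinearMap k (fun _ : Fin d => A) A :=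
  ∑ σ, α σ • (MultilinearMap.mkPiAlgebraFin k d A).domDomCongr σ

lemma multilinearPolynomial_apply [CommSemiring k] [Algebra k A] {d : ℕ}
    (α : Equiv.Perm (Fin d) → k) (x : Fin d → A) :
    multilinearPolynomial A α x = ∑ σ, α σ • (List.ofFn (x ∘ σ)).prod := by
  simp only [multilinearPolynomial, sum_apply, smul_apply,
    MultilinearMap.domDomCongr_apply, MultilinearMap.mkPiAlgebraFin_apply]
  rfl

lemma sum_letterSums_eq_sum_perm {X : Type*} [DecidableEq X] {d : ℕ} (w : Fin d → X)
    (u : List X) (hu : u.length ≤ d) (y : Fin d → A) :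
    ∑ U : Finset (Fin d), (-1 : ℤ) ^ U.card •
        (u.map fun i => ∑ t with t ∉ U ∧ w t = i, y t).prod =
      ∑ σ ∈ {σ : Equiv.Perm (Fin d) | List.ofFn (w ∘ σ) = u}, (List.ofFn (y ∘ σ)).prod := by
  classical
  obtain ⟨m, u, rfl⟩ : ∃ m, ∃ u' : Fin m → X, List.ofFn u' = u := ⟨_, u.get, List.ofFn_get u⟩
  rw [List.length_ofFn] at hu
  simp only [List.map_ofFn]
  refine (sum_neg_one_pow_card_smul_prod_letterSums w u y).trans ?_
  simpa only [List.map_ofFn] using sum_surjective_eq_sum_perm hu w u fun l => (l.map y).prod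

-- The coefficient of a permutation is read off a word of maximal length in the given identity.
lemma exists_multilinearPolynomial_eq_zero {k : Type u'} {A : Type u} [CommRing k] [Ring A]
    [Algebra k A] (h : SatisfiesPolynomialIdentity k A) :
    ∃ (d : ℕ) (α : Equiv.Perm (Fin d) → k), α 1 ≠ 0 ∧ multilinearPolynomial A α = 0 := by
  classical
  obtain ⟨n, f, hf, hf0⟩ := h
  set g := (FreeAlgebra.equivMonoidAlgebraFreeMonoid f).coeff with hg
  have hg0 : g ≠ 0 := by simpa [hg] using hf
  obtain ⟨w, hw, hmax⟩ := Finset.exists_max_image g.support (fun u => u.toList.length)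
    (Finsupp.support_nonempty_iff.2 hg0)
  refine ⟨w.toList.length, fun σ => g (.ofList (List.ofFn (w.toList.get ∘ σ))), ?_, ?_⟩
  · simpa using hw
  · ext y
    rw [multilinearPolynomial_apply, zero_apply]
    calc
      _ = ∑ σ : Equiv.Perm (Fin w.toList.length), ∑ u ∈ g.support,
            if .ofList (List.ofFn (w.toList.get ∘ σ)) = u then g u • (List.ofFn (y ∘ σ)).prod
            else 0 := by
        refine Finset.sum_congr rfl fun σ _ => ?_
        rw [Finset.sum_ite_eq]
        split_ifs with hmem
        · rfl
        · rw [Finsupp.notMem_support_iff.1 hmem, zero_smul]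
      _ = ∑ u ∈ g.support, g u • ∑ U : Finset (Fin w.toList.length), (-1 : ℤ) ^ U.card •
            (u.toList.map fun i => ∑ t with t ∉ U ∧ w.toList.get t = i, y t).prod := by
        rw [Finset.sum_comm]
        refine Finset.sum_congr rfl fun u hu => ?_
        rw [sum_letterSums_eq_sum_perm _ _ (hmax u hu), Finset.smul_sum, Finset.sum_filter]
        exact Finset.sum_congr rfl fun σ _ => if_congr
          FreeMonoid.ofList.eq_symm_apply.symm rfl rfl
      _ = ∑ U : Finset (Fin w.toList.length), (-1 : ℤ) ^ U.card • FreeAlgebra.lift k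
            (fun i => ∑ t with t ∉ U ∧ w.toList.get t = i, y t) f := by
        simp_rw [freeAlgebra_lift_eq_sum, ← hg, Finset.smul_sum]
        rw [Finset.sum_comm]
        simp_rw [smul_comm (g _)]
      _ = 0 := by simp only [hf0, smul_zero, Finset.sum_const_zero]

end PolynomialIdentities

section NilpotentAndMaximalIdeals

variable {R : Type*} [Ring R] [IsNoetherianRing R]

lemma eq_zero_of_forall_isNilpotent_mul (hR : IsSemiprimeRing R) {a : R}
    (hnil : ∀ x, IsNilpotent (a * x)) : a = 0 := by
  by_contra ha
  obtain ⟨-, ⟨b, hab, hb, rfl⟩, hmax⟩ := set_has_maximal_iff_noetherian.mpr ‹IsNoetherianRing R›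
    {J : Ideal R | ∃ b, a ∣ b ∧ b ≠ 0 ∧ J = LinearMap.ker (LinearMap.toSpanSingleton R R b)}
    ⟨_, a, dvd_rfl, ha, rfl⟩
  refine hb (hR b fun x => ?_)
  have hab' (n : ℕ) : a ∣ (b * x) ^ (n + 1) :=
    (hab.mul_right x).trans (dvd_pow_self _ n.succ_ne_zero)
  obtain ⟨y, hy⟩ := hab.mul_right x
  obtain ⟨n, hn⟩ : IsNilpotent (b * x) := hy ▸ hnil y
  induction n with
  | zero => rw [← mul_one (b * x * b), ← pow_zero (b * x), hn, mul_zero]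
  | succ n ih =>
    by_cases hn0 : (b * x) ^ n = 0
    · exact ih hn0
    cases n with
    | zero => rw [zero_add, pow_one] at hn; rw [hn, zero_mul]
    | succ n =>
      have hle : LinearMap.ker (LinearMap.toSpanSingleton R R b) ≤
          LinearMap.ker (LinearMap.toSpanSingleton R R ((b * x) ^ (n + 1))) := fun z hz => by
        rw [LinearMap.mem_ker, LinearMap.toSpanSingleton_apply, smul_eq_mul] at hz ⊢
        rw [pow_succ', ← mul_assoc, ← mul_assoc, hz, zero_mul, zero_mul]
      have hmem : b * x ∈ LinearMap.ker (LinearMap.toSpanSingleton R R ((b * x) ^ (n + 1))) := by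
        rw [LinearMap.mem_ker, LinearMap.toSpanSingleton_apply, smul_eq_mul, ← pow_succ', hn]
      rwa [← hle.eq_of_not_lt (hmax _ ⟨_, hab' n, hn0, rfl⟩), LinearMap.mem_ker,
        LinearMap.toSpanSingleton_apply, smul_eq_mul] at hmem

open Polynomial in
-- Amitsur: if `C a` is in the Jacobson radical then `1 - C a * X` has an inverse in `R[X]`, and
-- comparing coefficients it must be `∑ aⁿ Xⁿ`, so that `a` is nilpotent.
lemma isNilpotent_of_C_mem_jacobson {R : Type*} [Ring R] {a : R}
    (ha : C a ∈ Ring.jacobson R[X]) : IsNilpotent a := by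
  rw [← Ideal.jacobson_bot, Ideal.mem_jacobson_iff] at ha
  obtain ⟨z, hz⟩ := ha (-X)
  have hz' : z = 1 + z * C a * X := by
    rw [Ideal.mem_bot, mul_neg, neg_mul, mul_assoc, X_mul_C, ← mul_assoc, sub_eq_zero] at hz
    rwa [neg_add_eq_sub, sub_eq_iff_eq_add] at hz
  have hcoeff (n : ℕ) : z.coeff n = a ^ n := by
    induction n with
    | zero => rw [hz', coeff_add, coeff_one_zero, coeff_mul_X_zero, add_zero, pow_zero]
    | succ n ih =>
      rw [hz', coeff_add, coeff_mul_X, coeff_mul_C, ih, coeff_one, if_neg n.succ_ne_zero, zero_add,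
        pow_succ]
  exact ⟨z.natDegree + 1, by rw [← hcoeff, coeff_eq_zero_of_natDegree_lt (Nat.lt_succ_self _)]⟩

open Polynomial in
lemma exists_isMaximal_C_notMem (hR : IsSemiprimeRing R) {r : R} (hr : r ≠ 0) :
    ∃ m : Ideal R[X], m.IsMaximal ∧ C r ∉ m := by
  by_contra! hcon
  have hrJ : C r ∈ Ring.jacobson R[X] := by
    rw [Ring.jacobson_eq_sInf_isMaximal, Submodule.mem_sInf]
    exact hcon
  exact hr (eq_zero_of_forall_isNilpotent_mul hR fun x =>
    isNilpotent_of_C_mem_jacobson (C_mul (R := R) ▸ Ideal.mul_mem_right _ _ hrJ))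

end NilpotentAndMaximalIdeals

section MaximalCommutativeSubrings

lemma exists_centralizer_eq_self (D : Type*) [Ring D] : ∃ s : Set D, Set.centralizer s = s := by
  obtain ⟨s, hs⟩ := zorn_subset {s : Set D | s ⊆ Set.centralizer s} fun c hc hchain =>
    ⟨⋃₀ c, fun a ⟨s, hs, has⟩ b ⟨t, ht, hbt⟩ => (hchain.total hs ht).elim
      (fun h => hc ht (h has) b hbt) fun h => hc hs has b (h hbt),
      fun _ => Set.subset_sUnion_of_mem⟩
  refine ⟨s, subset_antisymm (fun x hx => ?_) hs.prop⟩
  have hins : insert x s ⊆ Set.centralizer (insert x s) := by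
    rintro a (rfl | ha) b (rfl | hb)
    · rfl
    · exact hx b hb
    · exact (hx a ha).symm
    · exact hs.prop ha b hb
  exact hs.le_of_ge hins (Set.subset_insert x s) (Set.mem_insert x s)

-- `L` is a maximal commutative subring of the division ring `Module.End S M`.
lemma exists_field_forall_end_eq_smul (S : Type u) [Ring S] (M : Type v) [AddCommGroup M]
    [Module S M] [IsSimpleModule S M] :
    ∃ (L : Type v) (_ : Field L) (_ : Module L M), SMulCommClass S L M ∧
      ∀ f : Module.End S M, (∀ (l : L) m, f (l • m) = l • f m) → ∃ l : L, ∀ m, f m = l • m := by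
  classical
  obtain ⟨s, hs⟩ := exists_centralizer_eq_self (Module.End S M)
  let L := Subring.centralizer s
  have hmem {x} : x ∈ L ↔ x ∈ s := Set.ext_iff.1 hs x
  have hcomm (a b : L) : a * b = b * a :=
    Subtype.ext (Subring.mem_centralizer_iff.1 b.2 _ (hmem.1 a.2))
  have hfield : IsField L := by
    refine ⟨⟨0, 1, fun h => zero_ne_one (congrArg Subtype.val h)⟩, hcomm, fun {a} ha => ?_⟩
    have ha' : (a : Module.End S M) ≠ 0 := fun h => ha (Subtype.ext h)
    refine ⟨⟨(a : Module.End S M)⁻¹, Subring.mem_centralizer_iff.2 fun g hg => ?_⟩,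
      Subtype.ext (mul_inv_cancel₀ ha')⟩
    exact Commute.inv_right₀ (Subring.mem_centralizer_iff.1 a.2 g hg)
  let : Field L := hfield.toField
  let : Module L M := inferInstanceAs (Module (Subring.centralizer s) M)
  refine ⟨L, inferInstance, inferInstance,
    ⟨fun t l m => ((l : Module.End S M).map_smul t m).symm⟩, fun f hf => ?_⟩
  refine ⟨⟨f, Subring.mem_centralizer_iff.2 fun g hg => ?_⟩, fun _ => rfl⟩
  exact LinearMap.ext fun m => (hf ⟨g, hmem.2 hg⟩ m).symm

lemma exists_smul_eq_smul_of_forall_mul_comm {S L M : Type*} [Ring S] [AddCommGroup M] [Module S M]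
    [Field L] [Module L M] [SMulCommClass S L M]
    (hL : ∀ f : Module.End S M, (∀ (l : L) m, f (l • m) = l • f m) → ∃ l : L, ∀ m, f m = l • m)
    {z : S} (hz : ∀ s, z * s = s * z) : ∃ l : L, ∀ m : M, z • m = l • m :=
  hL
    { toFun := (z • ·)
      map_add' := smul_add z
      map_smul' := fun s m => by rw [RingHom.id_apply, ← mul_smul, ← mul_smul, hz] }
    fun l m => smul_comm z l m

end MaximalCommutativeSubrings

section MultilinearMaps

lemma multilinearMap_eq_zero_of_forall_mem_span {L E G : Type*} [CommRing L] [AddCommGroup E]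
    [Module L E] [AddCommGroup G] [Module L G] {d : ℕ} (F : MultilinearMap L (fun _ : Fin d => E) G)
    {W : Set E} (hF : ∀ x : Fin d → E, (∀ i, x i ∈ W) → F x = 0) (x : Fin d → E)
    (hx : ∀ i, x i ∈ Submodule.span L W) : F x = 0 := by
  suffices key : ∀ (T : Finset (Fin d)) (x : Fin d → E), (∀ i ∈ T, x i ∈ Submodule.span L W) →
      (∀ i ∉ T, x i ∈ W) → F x = 0 from
    key .univ x (fun i _ => hx i) fun i hi => absurd (Finset.mem_univ i) hi
  intro T
  induction T using Finset.induction_on with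
  | empty => exact fun x _ h => hF x fun i => h i (Finset.notMem_empty i)
  | insert j T hj ih =>
    intro x hspan hW
    suffices h : Submodule.span L W ≤ LinearMap.ker (F.toLinearMap x j) by
      simpa only [LinearMap.mem_ker, MultilinearMap.toLinearMap_apply, Function.update_eq_self]
        using h (hspan j (Finset.mem_insert_self j T))
    refine Submodule.span_le.2 fun y hy => ih _ (fun i hi => ?_) fun i hi => ?_
    · rw [Function.update_of_ne (ne_of_mem_of_not_mem hi hj)]
      exact hspan i (Finset.mem_insert_of_mem hi)
    · rcases eq_or_ne i j with rfl | hij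
      · rwa [Function.update_self]
      · rw [Function.update_of_ne hij]
        exact hW i (by simp only [Finset.mem_insert, hij, hi, or_self, not_false_eq_true])

lemma exists_forall_mem_multilinearMap_ne_zero {L E G : Type*} [CommRing L] [AddCommGroup E]
    [Module L E] [AddCommGroup G] [Module L G] {d : ℕ} (F : MultilinearMap L (fun _ : Fin d => E) G)
    {α : Type*} {ρ : α → E} (hρ : Submodule.span L (Set.range ρ) = ⊤) {x : Fin d → E}
    (hx : F x ≠ 0) : ∃ y : Fin d → α, F (ρ ∘ y) ≠ 0 := by
  by_contra! h
  refine hx (multilinearMap_eq_zero_of_forall_mem_span F (W := Set.range ρ) (fun x hx => ?_) x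
    fun _ => hρ ▸ Submodule.mem_top)
  choose y hy using hx
  rw [← funext hy]
  exact h y

open Polynomial in
lemma prod_ofFn_monomial {R : Type*} [Semiring R] {d : ℕ} (n : Fin d → ℕ) (a : Fin d → R) :
    (List.ofFn fun i => monomial (n i) (a i)).prod = monomial (∑ i, n i) (List.ofFn a).prod := by
  induction d with
  | zero => simp
  | succ d ih =>
    rw [List.ofFn_succ, List.ofFn_succ, List.prod_cons, List.prod_cons, ih, monomial_mul_monomial,
      Fin.sum_univ_succ]

open Polynomial in
lemma multilinearPolynomial_polynomial_eq_zero {k R : Type*} [CommRing k] [Ring R] [Algebra k R]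
    {d : ℕ} {α : Equiv.Perm (Fin d) → k} (hα : multilinearPolynomial R α = 0) :
    multilinearPolynomial R[X] α = 0 := by
  ext1 x
  refine multilinearMap_eq_zero_of_forall_mem_span _ (W := {p | ∃ n a, monomial n a = p})
    (fun x hx => ?_) x fun i => ?_
  · choose n a hna using hx
    have hsum (σ : Equiv.Perm (Fin d)) : ∑ i, n (σ i) = ∑ i, n i := Equiv.sum_comp σ n
    rw [multilinearPolynomial_apply, ← funext hna]
    calc
      _ = monomial (∑ i, n i) (multilinearPolynomial R α a) := by
        simp only [multilinearPolynomial_apply, map_sum, ← smul_monomial, Function.comp_def,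
          prod_ofFn_monomial, hsum]
      _ = 0 := by rw [hα, zero_apply, map_zero]
  · rw [(x i).as_sum_support]
    exact Submodule.sum_mem _ fun n _ => Submodule.subset_span ⟨_, _, rfl⟩

end MultilinearMaps

section Density

variable {S L M : Type*} [Ring S] [AddCommGroup M] [Module S M] [Field L] [Module L M]
  [SMulCommClass S L M]

lemma toSubmodule_adjoin_range_toModuleEnd :
    Subalgebra.toSubmodule (Algebra.adjoin L (Set.range (Module.toModuleEnd L (S := S) M))) =
      Submodule.span L (Set.range (Module.toModuleEnd L (S := S) M)) := by
  have h := MonoidHom.coe_mrange (Module.toModuleEnd L (S := S) M : S →* Module.End L M)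
  rw [MonoidHom.coe_coe] at h
  rw [Algebra.adjoin_eq_span, ← h, Submonoid.closure_eq]

lemma exists_mem_span_range_toModuleEnd_eqOn [IsSimpleModule S M]
    (hL : ∀ f : Module.End S M, (∀ (l : L) m, f (l • m) = l • f m) → ∃ l : L, ∀ m, f m = l • m)
    (f : Module.End L M) (t : Finset M) :
    ∃ b ∈ Submodule.span L (Set.range (Module.toModuleEnd L (S := S) M)), ∀ m ∈ t, f m = b m := by
  rw [← toSubmodule_adjoin_range_toModuleEnd]
  set φ := Module.toModuleEnd L (S := S) M
  set B := Algebra.adjoin L (Set.range φ)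
  have hφ (s : S) : φ s ∈ B := Algebra.subset_adjoin ⟨s, rfl⟩
  have : IsSimpleModule B M := by
    refine isSimpleModule_iff_toSpanSingleton_surjective.2
      ⟨IsSimpleModule.nontrivial S M, fun m hm y => ?_⟩
    obtain ⟨s, hs⟩ := IsSimpleModule.toSpanSingleton_surjective S hm y
    exact ⟨⟨φ s, hφ s⟩, hs⟩
  have hEnd (g : Module.End B M) : ∃ l : L, ∀ m, g m = l • m :=
    hL { toFun := g, map_add' := map_add g, map_smul' := fun s => g.map_smul (⟨φ s, hφ s⟩ : B) }
      fun l => g.map_smul (algebraMap L B l)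
  obtain ⟨b, hb⟩ := jacobson_density (R := B)
    { toFun := f
      map_add' := map_add f
      map_smul' := fun g m => by
        obtain ⟨l, hl⟩ := hEnd g
        simp only [Module.End.smul_def, RingHom.id_apply, hl, map_smul] } t
  exact ⟨b, b.2, hb⟩

lemma span_range_toModuleEnd_eq_top [IsSimpleModule S M] [FiniteDimensional L M]
    (hL : ∀ f : Module.End S M, (∀ (l : L) m, f (l • m) = l • f m) → ∃ l : L, ∀ m, f m = l • m) :
    Submodule.span L (Set.range (Module.toModuleEnd L (S := S) M)) = ⊤ := by
  refine eq_top_iff.2 fun f _ => ?_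
  obtain ⟨t, ht⟩ := Module.Finite.fg_top (R := L) (M := M)
  obtain ⟨b, hb, hfb⟩ := exists_mem_span_range_toModuleEnd_eqOn hL f t
  rwa [LinearMap.ext_on ht fun m hm => hfb m hm]

end Density

section Kaplansky

variable {L M : Type*} [Field L] [AddCommGroup M] [Module L M]

lemma prod_map_staircase_apply {v : ℕ → M} {b : ℕ → Module.End L M} {d : ℕ}
    (hb : ∀ j, ∀ i ≤ d, b j (v i) = if i = j + 1 then v j else 0) (l : List ℕ) (hl : l.length ≤ d) :
    (l.map b).prod (v l.length) = if l = List.range l.length then v 0 else 0 := by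
  induction l using List.reverseRecOn with
  | nil => simp
  | append_singleton l j ih =>
    rw [List.length_append, List.length_singleton] at hl ⊢
    rw [List.map_append, List.prod_append, List.map_singleton, List.prod_singleton,
      Module.End.mul_apply, hb _ _ hl, List.range_succ]
    by_cases hj : l.length = j
    · rw [if_pos (congrArg (· + 1) hj), ← hj, ih (Nat.le_of_succ_le hl)]
      simp only [List.append_cancel_right_eq]
    · rw [if_neg (by omega), map_zero, if_neg]
      exact fun h => hj (List.singleton_injective (List.append_inj_right' h rfl)).symm

lemma exists_staircase {d : ℕ} {v : Fin (d + 1) → M} (hv : LinearIndependent L v) :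
    ∃ f : ℕ → Module.End L M, ∀ j, ∀ i ≤ d,
      f j (v (Fin.ofNat _ i)) = if i = j + 1 then v (Fin.ofNat _ j) else 0 := by
  obtain ⟨g, hg⟩ := (Finsupp.linearCombination L v).exists_leftInverse_of_injective
    (LinearMap.ker_eq_bot.2 hv)
  have hgv (i) : g (v i) = Finsupp.single i 1 := by
    simpa only [LinearMap.comp_apply, Finsupp.linearCombination_single, one_smul,
      LinearMap.id_apply] using LinearMap.congr_fun hg (Finsupp.single i 1)
  let target (j : ℕ) (i : Fin (d + 1)) : M := if (i : ℕ) = j + 1 then v (Fin.ofNat _ j) else 0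
  refine ⟨fun j => Finsupp.linearCombination L (target j) ∘ₗ g, fun j i hi => ?_⟩
  simp only [LinearMap.comp_apply, hgv, Finsupp.linearCombination_single, one_smul, target,
    Fin.val_ofNat, Nat.mod_eq_of_lt (Nat.lt_succ_of_le hi)]

-- Kaplansky: on `d + 1` independent vectors, density produces operators `b j` moving `v (j + 1)` to
-- `v j` and killing the other `v i`; only the identity permutation contributes to `v d ↦ v 0`.
lemma rank_le_of_multilinearPolynomial_eq_zero {B : Submodule L (Module.End L M)}
    (hB : ∀ (f : Module.End L M) (t : Finset M), ∃ b ∈ B, ∀ m ∈ t, f m = b m) {d : ℕ}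
    {β : Equiv.Perm (Fin d) → L} (hβ1 : β 1 ≠ 0)
    (hβ : ∀ x, (∀ i, x i ∈ B) → multilinearPolynomial (Module.End L M) β x = 0) :
    Module.rank L M ≤ d := by
  classical
  refine rank_le fun s hs => ?_
  by_contra! hcard
  obtain ⟨e⟩ : Nonempty (Fin (d + 1) ↪ s) :=
    Function.Embedding.nonempty_of_card_le (by simpa using hcard)
  set v : Fin (d + 1) → M := fun i => e i
  have hv : LinearIndependent L v := hs.comp e e.injective
  obtain ⟨f, hf⟩ := exists_staircase hv
  choose b hbB hb using fun j => hB (f j) (Finset.univ.image v)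
  have hterm (σ : Equiv.Perm (Fin d)) :
      (List.ofFn ((fun i : Fin d => b i) ∘ σ)).prod (v (Fin.ofNat _ d)) =
        if σ = 1 then v (Fin.ofNat _ 0) else 0 := by
    have h := prod_map_staircase_apply (v := fun i => v (Fin.ofNat _ i)) (b := b) (d := d)
      (fun j i hi => by rw [← hf j i hi, hb j _ (Finset.mem_image_of_mem _ (Finset.mem_univ _))])
      (List.ofFn fun i => (σ i : ℕ)) (List.length_ofFn).le
    rw [List.map_ofFn, List.length_ofFn] at h
    refine h.trans (if_congr ?_ rfl rfl)
    rw [← List.map_coe_finRange_eq_range, ← List.ofFn_id, List.map_ofFn, List.ofFn_inj,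
      Equiv.ext_iff, funext_iff]
    exact forall_congr' fun i => Fin.ext_iff.symm
  have h0 := LinearMap.congr_fun (hβ (fun i => b i) fun i => hbB _) (v (Fin.ofNat _ d))
  simp only [multilinearPolynomial_apply, LinearMap.sum_apply, LinearMap.smul_apply, hterm,
    smul_ite, smul_zero, Finset.sum_ite_eq', Finset.mem_univ, if_true, LinearMap.zero_apply] at h0
  exact smul_ne_zero hβ1 (hv.ne_zero _) h0

variable {k S : Type*} [Field k] [Ring S] [Algebra k S] [Module S M] [SMulCommClass S L M]

lemma multilinearPolynomial_toModuleEnd_eq_zero {d : ℕ} {α : Equiv.Perm (Fin d) → k}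
    {β : Equiv.Perm (Fin d) → L} (hαβ : ∀ σ (m : M), algebraMap k S (α σ) • m = β σ • m)
    (hα : multilinearPolynomial S α = 0) (x : Fin d → S) :
    multilinearPolynomial (Module.End L M) β (Module.toModuleEnd L M ∘ x) = 0 := by
  ext m
  have h := congrArg (· • m) (MultilinearMap.congr_fun hα x)
  simp only [multilinearPolynomial_apply, Finset.sum_smul, Algebra.smul_def, mul_smul, hαβ,
    zero_apply, zero_smul] at h
  rw [multilinearPolynomial_apply, LinearMap.sum_apply, LinearMap.zero_apply, ← h]
  refine Finset.sum_congr rfl fun σ _ => ?_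
  rw [LinearMap.smul_apply, Function.comp_assoc, ← List.map_ofFn, ← map_list_prod]
  rfl

lemma rank_le_of_isSimpleModule [IsSimpleModule S M]
    (hL : ∀ f : Module.End S M, (∀ (l : L) m, f (l • m) = l • f m) → ∃ l : L, ∀ m, f m = l • m)
    {d : ℕ} {α : Equiv.Perm (Fin d) → k} (hα1 : α 1 ≠ 0) (hα : multilinearPolynomial S α = 0) :
    Module.rank L M ≤ d := by
  choose β hβ using fun σ => exists_smul_eq_smul_of_forall_mul_comm (M := M) hL
    (Algebra.commutes (A := S) (α σ))
  have hβ1 : β 1 ≠ 0 := fun h0 => by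
    have := IsSimpleModule.nontrivial S M
    obtain ⟨m, hm⟩ := exists_ne (0 : M)
    have h := hβ 1 (algebraMap k S (α 1)⁻¹ • m)
    rw [h0, zero_smul, ← mul_smul, ← map_mul, mul_inv_cancel₀ hα1, map_one, one_smul] at h
    exact hm h
  refine rank_le_of_multilinearPolynomial_eq_zero (exists_mem_span_range_toModuleEnd_eqOn hL) hβ1
    (multilinearMap_eq_zero_of_forall_mem_span _ fun x hx => ?_)
  choose y hy using hx
  rw [← funext hy]
  exact multilinearPolynomial_toModuleEnd_eq_zero hβ hα y

end Kaplansky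

section AbsolutelyIrreducible

/-- A matrix representation over a field `L` whose image spans the whole matrix algebra; by
Burnside's theorem this is absolute irreducibility. -/
def IsAbsolutelyIrreducible {R L : Type*} [Ring R] [Field L] {n : ℕ}
    (ρ : R →+* Matrix (Fin n) (Fin n) L) : Prop :=
  Submodule.span L (Set.range ρ) = ⊤

open Polynomial in
lemma span_range_toModuleEnd_comp_C {R L M : Type*} [Ring R] [AddCommGroup M] [Module R[X] M]
    [Field L] [Module L M] [SMulCommClass R[X] L M] {l : L} (hl : ∀ m : M, (X : R[X]) • m = l • m) :
    Submodule.span L (Set.range ((Module.toModuleEnd L (S := R[X]) M).comp C)) =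
      Submodule.span L (Set.range (Module.toModuleEnd L (S := R[X]) M)) := by
  refine le_antisymm (Submodule.span_mono ?_) (Submodule.span_le.2 ?_)
  · rintro _ ⟨a, rfl⟩
    exact ⟨C a, rfl⟩
  rintro _ ⟨p, rfl⟩
  set φ := Module.toModuleEnd L (S := R[X]) M
  have hX : φ X = algebraMap L _ l := LinearMap.ext hl
  rw [SetLike.mem_coe]
  induction p using Polynomial.induction_on' with
  | add p q hp hq => rw [map_add]; exact Submodule.add_mem _ hp hq
  | monomial n a =>
    rw [← C_mul_X_pow_eq_monomial, map_mul, map_pow, hX, ← map_pow, ← Algebra.commutes,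
      ← Algebra.smul_def]
    exact Submodule.smul_mem _ _ (Submodule.subset_span ⟨a, rfl⟩)

open Polynomial in
-- Passing to `R[X]` is Amitsur's trick: `R[X]` has zero Jacobson radical, and the central variable
-- acts on a simple `R[X]`-module by a scalar, so nothing is lost on restriction to `R`.
lemma exists_isAbsolutelyIrreducible_apply_ne_zero {k : Type*} {R : Type u} [Field k] [Ring R]
    [Algebra k R] [IsNoetherianRing R] (hR : IsSemiprimeRing R) {d : ℕ}
    {α : Equiv.Perm (Fin d) → k} (hα1 : α 1 ≠ 0) (hα : multilinearPolynomial R α = 0) {r : R}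
    (hr : r ≠ 0) :
    ∃ (L : Type u) (_ : Field L) (n : ℕ) (ρ : R →+* Matrix (Fin n) (Fin n) L),
      n ≤ d ∧ IsAbsolutelyIrreducible ρ ∧ ρ r ≠ 0 := by
  obtain ⟨m, hm, hrm⟩ := exists_isMaximal_C_notMem hR hr
  have : IsSimpleModule R[X] (R[X] ⧸ m) := isSimpleModule_iff_isCoatom.2 hm.out
  obtain ⟨L, _, _, _, hL⟩ := exists_field_forall_end_eq_smul R[X] (R[X] ⧸ m)
  have hrank : Module.rank L (R[X] ⧸ m) ≤ d :=
    rank_le_of_isSimpleModule hL hα1 (multilinearPolynomial_polynomial_eq_zero hα)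
  have : FiniteDimensional L (R[X] ⧸ m) :=
    Module.rank_lt_aleph0_iff.1 (hrank.trans_lt Cardinal.natCast_lt_aleph0)
  obtain ⟨l, hl⟩ := exists_smul_eq_smul_of_forall_mul_comm (M := R[X] ⧸ m) hL
    (fun p => X_mul (p := p))
  let e := LinearMap.toMatrixAlgEquiv (Module.finBasis L (R[X] ⧸ m))
  let φ := (Module.toModuleEnd L (S := R[X]) (R[X] ⧸ m)).comp C
  refine ⟨L, inferInstance, Module.finrank L (R[X] ⧸ m), e.toRingEquiv.toRingHom.comp φ,
    by rwa [← Module.finrank_eq_rank, Nat.cast_le] at hrank, ?_, fun h0 => ?_⟩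
  · have hrange : Set.range (e.toRingEquiv.toRingHom.comp φ) =
        e.toLinearMap '' Set.range φ := Set.range_comp e φ
    rw [IsAbsolutelyIrreducible, hrange, Submodule.span_image, span_range_toModuleEnd_comp_C hl,
      span_range_toModuleEnd_eq_top hL, Submodule.map_top, LinearMap.range_eq_top]
    exact e.surjective
  · have h1 : φ r = 0 := e.injective (h0.trans (map_zero e).symm)
    refine hrm ((Submodule.Quotient.mk_eq_zero m).1 ?_)
    have h2 : C r • Submodule.Quotient.mk (p := m) 1 = 0 := LinearMap.congr_fun h1 _
    rwa [← Submodule.Quotient.mk_smul, smul_eq_mul, mul_one] at h2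

end AbsolutelyIrreducible

section CapelliForm

lemma sum_alternatingMap_update_smul {L V : Type*} [Field L] [AddCommGroup V] [Module L V]
    [FiniteDimensional L V] {N : ℕ} (hN : Module.finrank L V ≤ N) (φ : V [⋀^Fin N]→ₗ[L] L)
    (X : Fin N → V) (A : V) : ∑ j, φ (Function.update X j A) • X j = φ X • A := by
  rcases hN.lt_or_eq with h | h
  · have hφ : φ = 0 := AlternatingMap.ext fun v => φ.map_linearDependent v fun hv => by
      have := hv.fintype_card_le_finrank
      rw [Fintype.card_fin] at this
      omega
    simp only [hφ, AlternatingMap.zero_apply, zero_smul, Finset.sum_const_zero]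
  · let b := Module.finBasisOfFinrankEq L V h
    rw [φ.eq_smul_basis_det b]
    simp only [AlternatingMap.smul_apply, smul_eq_mul, mul_smul, ← Finset.smul_sum]
    congr 1
    refine b.repr.injective (Finsupp.ext fun i => ?_)
    have hcramer := congrFun (Matrix.mulVec_cramer (b.toMatrix X) (b.repr A)) i
    simp only [Matrix.mulVec, dotProduct, Pi.smul_apply, smul_eq_mul, Matrix.cramer_apply]
      at hcramer
    rw [map_smul, Finsupp.smul_apply, Module.Basis.det_apply, smul_eq_mul, ← hcramer, map_sum,
      Finsupp.finsetSum_apply]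
    refine Finset.sum_congr rfl fun j _ => ?_
    rw [map_smul, Finsupp.smul_apply, smul_eq_mul, mul_comm, Module.Basis.det_apply,
      Module.Basis.toMatrix_update]
    rfl

variable {L : Type*} [Field L] {m N : ℕ}

section Dual

variable {φ : (Matrix (Fin m) (Fin m) L) [⋀^Fin N]→ₗ[L] L} {E X : Fin N → Matrix (Fin m) (Fin m) L}

lemma sum_trace_mul_smul (hm : m * m ≤ N)
    (hE : ∀ i A, (E i * A).trace = φ (Function.update X i A)) (A : Matrix (Fin m) (Fin m) L) :
    ∑ j, (E j * A).trace • X j = φ X • A := by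
  simp only [hE]
  refine sum_alternatingMap_update_smul ?_ φ X A
  rwa [Module.finrank_matrix, Fintype.card_fin, Module.finrank_self, mul_one]

lemma sum_mul_mul_eq_smul_one (hm : m * m ≤ N)
    (hE : ∀ i A, (E i * A).trace = φ (Function.update X i A)) (A : Matrix (Fin m) (Fin m) L) :
    ∑ j, E j * A * X j = (φ X * A.trace) • 1 := by
  ext a t
  have hentry (j : Fin N) (s : Fin m) :
      (E j * A) a s = (E j * (A * Matrix.single s a 1)).trace := by
    rw [← mul_assoc, Matrix.trace_mul_comm, Matrix.trace_single_mul, one_smul]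
  have hsum (s : Fin m) : ∑ j, (E j * A) a s * X j s t =
      φ X * (A * Matrix.single s a (1 : L)) s t := by
    simpa only [Matrix.sum_apply, Matrix.smul_apply, smul_eq_mul, hentry] using
      congrFun₂ (sum_trace_mul_smul hm hE (A * Matrix.single s a 1)) s t
  simp only [Matrix.sum_apply, Matrix.mul_apply (M := _ * A)]
  rw [Finset.sum_comm]
  simp only [hsum, ← Finset.mul_sum, Matrix.smul_apply, smul_eq_mul, mul_assoc]
  congr 1
  rcases eq_or_ne a t with rfl | hat
  · simp only [Matrix.mul_single_apply_same, mul_one, Matrix.one_apply_eq, Matrix.trace,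
      Matrix.diag]
  · simp only [Matrix.mul_single_apply_of_ne _ _ _ _ _ hat.symm, Finset.sum_const_zero,
      Matrix.one_apply_ne hat, mul_zero]

end Dual

/-- The multilinear form `X ↦ tr (T₀ X₀ ⋯ Tₙ Xₙ)` on matrices. -/
def prodTraceForm (T : Fin N → Module.End L (Matrix (Fin m) (Fin m) L)) :
    MultilinearMap L (fun _ : Fin N => Matrix (Fin m) (Fin m) L) L :=
  (Matrix.traceLinearMap (Fin m) L L).compMultilinearMap
    ((MultilinearMap.mkPiAlgebraFin L N (Matrix (Fin m) (Fin m) L)).compLinearMap T)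

lemma prodTraceForm_apply (T : Fin N → Module.End L (Matrix (Fin m) (Fin m) L))
    (X : Fin N → Matrix (Fin m) (Fin m) L) :
    prodTraceForm T X = (List.ofFn fun j => T j (X j)).prod.trace := rfl

/-- The trace of the Capelli polynomial `∑ σ, sign σ • ∏ j, U j * X (σ j) * W j`, as an alternating
form in `X`. -/
def capelliForm (U W : Fin N → Matrix (Fin m) (Fin m) L) :
    (Matrix (Fin m) (Fin m) L) [⋀^Fin N]→ₗ[L] L :=
  MultilinearMap.alternatization
    (prodTraceForm fun j => LinearMap.mulRight L (W j) ∘ₗ LinearMap.mulLeft L (U j))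

lemma capelliForm_apply (U W X : Fin N → Matrix (Fin m) (Fin m) L) :
    capelliForm U W X = ∑ σ : Equiv.Perm (Fin N),
      Equiv.Perm.sign σ • (List.ofFn fun j => U j * X (σ j) * W j).prod.trace :=
  MultilinearMap.alternatization_apply _ _

lemma exists_prod_ofFn_update_eq {R : Type u} [Ring R] (y U W : Fin N → R) (i : Fin N) :
    ∃ P Q : R, ∀ (B : Type v) [Ring B] (ρ : R →+* B) (a : B),
      (List.ofFn fun j => ρ (U j) * Function.update (ρ ∘ y) i a j * ρ (W j)).prod =
        ρ P * a * ρ Q := by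
  obtain ⟨l₁, l₂, hl⟩ := List.append_of_mem (List.mem_finRange i)
  have hnodup := List.nodup_finRange N
  rw [hl, List.nodup_append_comm, List.cons_append, List.nodup_cons, List.mem_append] at hnodup
  let word (l : List (Fin N)) := (l.map fun j => U j * y j * W j).prod
  refine ⟨word l₁ * U i, W i * word l₂, fun B _ ρ a => ?_⟩
  have hword (l : List (Fin N)) (hi : i ∉ l) :
      (l.map fun j => ρ (U j) * Function.update (ρ ∘ y) i a j * ρ (W j)).prod = ρ (word l) := by
    rw [map_list_prod, List.map_map]
    refine congrArg List.prod (List.map_congr_left fun j hj => ?_)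
    rw [Function.update_of_ne (ne_of_mem_of_not_mem hj hi)]
    simp only [Function.comp_apply, map_mul]
  rw [List.ofFn_eq_map, hl, List.map_append, List.map_cons, List.prod_append, List.prod_cons,
    hword l₁ fun h => hnodup.1 (.inr h), hword l₂ fun h => hnodup.1 (.inl h),
    Function.update_self]
  simp only [map_mul, mul_assoc]

lemma exists_trace_mul_eq_capelliForm_update {R : Type u} [Ring R] (x U W : Fin N → R) :
    ∃ e : Fin N → R, ∀ (L : Type v) [Field L] (m : ℕ) (ρ : R →+* Matrix (Fin m) (Fin m) L) (i : _)
      (A : Matrix (Fin m) (Fin m) L),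
      (ρ (e i) * A).trace = capelliForm (ρ ∘ U) (ρ ∘ W) (Function.update (ρ ∘ x) i A) := by
  choose P Q hPQ using fun (σ : Equiv.Perm (Fin N)) i =>
    exists_prod_ofFn_update_eq.{v, u} (x ∘ σ) U W (σ.symm i)
  refine ⟨fun i => ∑ σ, Equiv.Perm.sign σ • (Q σ i * P σ i), fun L _ m ρ i A => ?_⟩
  rw [capelliForm_apply, map_sum, Finset.sum_mul, Matrix.trace_sum]
  refine Finset.sum_congr rfl fun σ _ => ?_
  have hupdate (j : Fin N) : Function.update (ρ ∘ x) i A (σ j) =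
      Function.update (ρ ∘ x ∘ σ) (σ.symm i) A j :=
    congrFun (Function.update_comp_equiv (ρ ∘ x) σ i A) j
  simp only [hupdate, Function.comp_apply, hPQ]
  rw [Units.smul_def, Units.smul_def, map_zsmul, smul_mul_assoc, Matrix.trace_smul, map_mul,
    mul_assoc, Matrix.trace_mul_comm, mul_assoc]

variable {n : ℕ}

-- Feed in all matrix units `X = (E_{ab})` with `U = (E_{0a})` and `W = (E_{b0})`: only the identity
-- permutation contributes.
lemma exists_capelliForm_ne_zero (hn : 0 < n) :
    ∃ U W X : Fin (n * n) → Matrix (Fin n) (Fin n) L, capelliForm U W X ≠ 0 := by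
  let z : Fin n := ⟨0, hn⟩
  let q : Fin (n * n) ≃ Fin n × Fin n := finProdFinEquiv.symm
  refine ⟨fun j => Matrix.single z (q j).1 1, fun j => Matrix.single (q j).2 z 1,
    fun j => Matrix.single (q j).1 (q j).2 1, ?_⟩
  have hterm (i j : Fin (n * n)) : Matrix.single z (q j).1 (1 : L) *
      Matrix.single (q i).1 (q i).2 (1 : L) * Matrix.single (q j).2 z (1 : L) =
      if i = j then Matrix.single z z (1 : L) else 0 := by
    split_ifs with h
    · rw [h, Matrix.single_mul_single_same, Matrix.single_mul_single_same, mul_one, mul_one]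
    · by_cases ha : (q j).1 = (q i).1
      · have hb : (q i).2 ≠ (q j).2 := fun hb => h (q.injective (Prod.ext ha.symm hb))
        rw [ha, Matrix.single_mul_single_same, Matrix.single_mul_single_of_ne _ _ _ _ hb]
      · rw [Matrix.single_mul_single_of_ne _ _ _ _ ha, zero_mul]
  have hidem : IsIdempotentElem (Matrix.single z z (1 : L)) := by
    rw [IsIdempotentElem, Matrix.single_mul_single_same, mul_one]
  simp only [capelliForm_apply, hterm]
  rw [Finset.sum_eq_single 1]
  · simp only [Equiv.Perm.sign_one, one_smul, Equiv.Perm.coe_one, id, if_true]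
    rw [List.ofFn_const, List.prod_replicate, hidem.pow_eq (Nat.mul_pos hn hn).ne',
      Matrix.trace_single_eq_same]
    exact one_ne_zero
  · intro σ _ hσ
    obtain ⟨j, hj⟩ : ∃ j, σ j ≠ j := by
      by_contra! hc
      exact hσ (Equiv.ext hc)
    rw [List.prod_eq_zero (List.mem_ofFn.2 ⟨j, if_neg hj⟩), Matrix.trace_zero, smul_zero]
  · exact fun h => absurd (Finset.mem_univ _) h

lemma IsAbsolutelyIrreducible.exists_capelliForm_comp_ne_zero {R : Type*} [Ring R] (hn : 0 < n)
    {ρ : R →+* Matrix (Fin n) (Fin n) L} (hρ : IsAbsolutelyIrreducible ρ) :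
    ∃ x U W : Fin (n * n) → R, capelliForm (ρ ∘ U) (ρ ∘ W) (ρ ∘ x) ≠ 0 := by
  obtain ⟨U, W, X, h⟩ := exists_capelliForm_ne_zero (L := L) hn
  let FW := ∑ σ, Equiv.Perm.sign σ •
    prodTraceForm fun j => LinearMap.mulLeft L (U j * X (σ j))
  have hFW (W) : FW W = capelliForm U W X := by
    simp only [FW, sum_apply, smul_apply, prodTraceForm_apply, LinearMap.mulLeft_apply,
      capelliForm_apply]
  obtain ⟨w, hw⟩ := exists_forall_mem_multilinearMap_ne_zero FW hρ (hFW W ▸ h)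
  let FU := ∑ σ, Equiv.Perm.sign σ •
    prodTraceForm fun j => LinearMap.mulRight L (X (σ j) * ρ (w j))
  have hFU (U) : FU U = capelliForm U (ρ ∘ w) X := by
    simp only [FU, sum_apply, smul_apply, prodTraceForm_apply, LinearMap.mulRight_apply,
      capelliForm_apply, mul_assoc, Function.comp_apply]
  rw [hFW, ← hFU] at hw
  obtain ⟨u, hu⟩ := exists_forall_mem_multilinearMap_ne_zero FU hρ hw
  rw [hFU] at hu
  obtain ⟨x, hx⟩ := exists_forall_mem_multilinearMap_ne_zero
    (capelliForm (ρ ∘ u) (ρ ∘ w)).toMultilinearMap hρ hu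
  exact ⟨x, u, w, hx⟩

end CapelliForm

section AzumayaFrame

/-- A common denominator for the Azumaya structure of an algebra `H` with centre `Z`: generators
`gen` of `H` up to the factor `denom`, with coordinates `coord` given by the separability-type
element `∑ j, dual j ⊗ gen j`. After inverting `denom`, every `coord` becomes surjective, and `H`
becomes finite and separable over `Z`. -/
structure AzumayaFrame (Z H ι : Type*) [CommRing Z] [Ring H] [Algebra Z H] [Fintype ι] where
  gen : ι → H
  dual : ι → H
  coord : ι → H →ₗ[Z] Z
  denom : Z
  denom_smul (h : H) : denom • h = ∑ i, coord i h • gen i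
  coord_gen (i : ι) : coord i (gen i) = denom
  algebraMap_coord (i : ι) (h : H) :
    algebraMap Z H (coord i h) = ∑ j, dual j * (h * dual i) * gen j

variable {k : Type u'} [Field k] {R : Type u} [Ring R] [Algebra k R]

lemma exists_size_isAbsolutelyIrreducible [IsNoetherianRing R] [Nontrivial R]
    (hR : IsSemiprimeRing R) {d : ℕ} {α : Equiv.Perm (Fin d) → k} (hα1 : α 1 ≠ 0)
    (hα : multilinearPolynomial R α = 0) :
    ∃ n > 0, (∃ (L : Type u) (_ : Field L) (ρ : R →+* Matrix (Fin n) (Fin n) L),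
        IsAbsolutelyIrreducible ρ) ∧
      ∀ r : R, r ≠ 0 → ∃ (L : Type u) (_ : Field L) (m : ℕ) (ρ : R →+* Matrix (Fin m) (Fin m) L),
        m ≤ n ∧ ρ r ≠ 0 := by
  classical
  let p (n : ℕ) : Prop := ∃ (L : Type u) (_ : Field L) (ρ : R →+* Matrix (Fin n) (Fin n) L),
    IsAbsolutelyIrreducible ρ ∧ ρ 1 ≠ 0
  have hrep (r : R) (hr : r ≠ 0) := exists_isAbsolutelyIrreducible_apply_ne_zero hR hα1 hα hr
  obtain ⟨L, _, n₁, ρ₁, hn₁, hρ₁, h1⟩ := hrep 1 one_ne_zero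
  obtain ⟨L₀, _, ρ₀, hρ₀, h0⟩ : p (Nat.findGreatest p d) :=
    Nat.findGreatest_spec hn₁ ⟨L, inferInstance, ρ₁, hρ₁, h1⟩
  refine ⟨Nat.findGreatest p d, Nat.pos_of_ne_zero fun h => ?_, ⟨L₀, inferInstance, ρ₀, hρ₀⟩,
    fun r hr => ?_⟩
  · have : IsEmpty (Fin (Nat.findGreatest p d)) := h ▸ Fin.isEmpty
    exact h0 (Subsingleton.elim _ _)
  · obtain ⟨L, _, m, ρ, hm, hρ, h⟩ := hrep r hr
    have h1 : ρ 1 ≠ 0 := fun h1 => h (by rw [← mul_one r, map_mul, h1, mul_zero])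
    exact ⟨L, inferInstance, m, ρ, Nat.le_findGreatest hm ⟨L, inferInstance, ρ, hρ, h1⟩, h⟩

lemma map_sum_dual_mul_mul_gen {L : Type*} [Field L] {m N : ℕ} (hm : m * m ≤ N)
    (ρ : R →+* Matrix (Fin m) (Fin m) L) {φ : (Matrix (Fin m) (Fin m) L) [⋀^Fin N]→ₗ[L] L}
    {e x : Fin N → R} (he : ∀ i A, (ρ (e i) * A).trace = φ (Function.update (ρ ∘ x) i A))
    (i : Fin N) (a : R) :
    ρ (∑ j, e j * (a * e i) * x j) = (φ (ρ ∘ x) * (ρ (e i) * ρ a).trace) • 1 := by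
  rw [Matrix.trace_mul_comm, ← map_mul, ← sum_mul_mul_eq_smul_one hm he, map_sum]
  simp only [map_mul, Function.comp_apply]

instance instAlgebraSubalgebraCenter : Algebra (Subalgebra.center k R) R where
  algebraMap := (Subalgebra.center k R).val.toRingHom
  commutes' r a := (Subalgebra.mem_center_iff.1 r.2 a).symm
  smul_def' _ _ := rfl

/-- The frame on `R` over its centre determined by families `x` and `e` for which the elements
`∑ j, e j * (a * e i) * x j` are central and behave as coordinates of `a`. -/
def azumayaFrameOfCentral {N : ℕ} (x e : Fin N → R) (c : Subalgebra.center k R)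
    (hcenter : ∀ i a, ∑ j, e j * (a * e i) * x j ∈ Subalgebra.center k R)
    (hgen : ∀ i, ∑ j, e j * (x i * e i) * x j = c)
    (hsmul : ∀ a, c * a = ∑ i, (∑ j, e j * (a * e i) * x j) * x i) :
    AzumayaFrame (Subalgebra.center k R) R (Fin N) where
  gen := x
  dual := e
  coord i :=
    { toFun := fun a => ⟨∑ j, e j * (a * e i) * x j, hcenter i a⟩
      map_add' := fun a b => Subtype.ext <| by
        simp only [AddMemClass.coe_add, ← Finset.sum_add_distrib, add_mul, mul_add]
      map_smul' := fun r a => Subtype.ext <| by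
        simp only [RingHom.id_apply, smul_eq_mul, MulMemClass.coe_mul, Finset.mul_sum,
          Subalgebra.smul_def, ← mul_assoc, (Subalgebra.mem_center_iff.1 r.2 _)] }
  denom := c
  denom_smul := hsmul
  coord_gen i := Subtype.ext (hgen i)
  algebraMap_coord _ _ := rfl

-- With `x`, `U`, `W` chosen so that the Capelli form does not vanish in the largest absolutely
-- irreducible representation and `e` dual to `x` for the trace, Cramer's rule gives all required
-- identities in every representation of size at most `n`; these separate the elements of `R`.
theorem exists_azumayaFrame [IsNoetherianRing R] [Nontrivial R] (hR : IsSemiprimeRing R) {d : ℕ}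
    {α : Equiv.Perm (Fin d) → k} (hα1 : α 1 ≠ 0) (hα : multilinearPolynomial R α = 0) :
    ∃ (N : ℕ) (F : AzumayaFrame (Subalgebra.center k R) R (Fin N)), F.denom ≠ 0 := by
  obtain ⟨n, hn, ⟨L₀, _, ρ₀, hρ₀⟩, hsep⟩ := exists_size_isAbsolutelyIrreducible hR hα1 hα
  obtain ⟨x, U, W, hne⟩ := hρ₀.exists_capelliForm_comp_ne_zero hn
  obtain ⟨e, he⟩ := exists_trace_mul_eq_capelliForm_update.{u, u} x U W
  have hext {r s : R} (h : ∀ (L : Type u) [Field L] (m : ℕ) (ρ : R →+* Matrix (Fin m) (Fin m) L),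
      m * m ≤ n * n → ρ r = ρ s) : r = s := by
    by_contra hrs
    obtain ⟨L, _, m, ρ, hm, hne⟩ := hsep (r - s) (sub_ne_zero.2 hrs)
    exact hne (by rw [map_sub, h L m ρ (Nat.mul_self_le_mul_self hm), sub_self])
  have hcoord (L : Type u) [Field L] (m : ℕ) (ρ : R →+* Matrix (Fin m) (Fin m) L)
      (hm : m * m ≤ n * n) (i) (a) := map_sum_dual_mul_mul_gen hm ρ (he L m ρ) i a
  have hgen (L : Type u) [Field L] (m : ℕ) (ρ : R →+* Matrix (Fin m) (Fin m) L) (i) :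
      (ρ (e i) * ρ (x i)).trace = capelliForm (ρ ∘ U) (ρ ∘ W) (ρ ∘ x) := by
    rw [he, ← Function.comp_apply (f := ρ), Function.update_eq_self]
  have hcenter (i) (a) : ∑ j, e j * (a * e i) * x j ∈ Subalgebra.center k R :=
    Subalgebra.mem_center_iff.2 fun b => hext fun L _ m ρ hm => by
      rw [map_mul, map_mul, hcoord L m ρ hm, mul_smul_one, smul_one_mul]
  let i₀ : Fin (n * n) := ⟨0, Nat.mul_pos hn hn⟩
  refine ⟨n * n, azumayaFrameOfCentral x e ⟨_, hcenter i₀ (x i₀)⟩ hcenter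
    (fun i => hext fun L _ m ρ hm => ?_) (fun a => hext fun L _ m ρ hm => ?_), fun h0 => ?_⟩
  · rw [hcoord L m ρ hm, hcoord L m ρ hm, hgen, hgen]
  · rw [map_mul, hcoord L m ρ hm, hgen, smul_one_mul, mul_smul,
      ← sum_trace_mul_smul hm (he L m ρ) (ρ a), map_sum, Finset.smul_sum]
    refine Finset.sum_congr rfl fun i _ => ?_
    rw [map_mul, hcoord L m ρ hm, smul_one_mul, mul_smul]
    rfl
  · have h1 := hcoord L₀ n ρ₀ le_rfl i₀ (x i₀)
    have hc0 : ∑ j, e j * (x i₀ * e i₀) * x j = 0 := congrArg Subtype.val h0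
    have : Nonempty (Fin n) := ⟨⟨0, hn⟩⟩
    rw [hc0, map_zero, hgen] at h1
    exact smul_ne_zero (mul_ne_zero hne hne) one_ne_zero h1.symm

end AzumayaFrame

section ProjectiveDimension

lemma hasProjectiveDimensionLT_of_comp_eq_id {R : Type u} [Ring R] {A B : Type v} [AddCommGroup A]
    [Module R A] [AddCommGroup B] [Module R B] (i : A →ₗ[R] B) (p : B →ₗ[R] A)
    (hpi : p ∘ₗ i = LinearMap.id) {n : ℕ} (hB : HasProjectiveDimensionLT (ModuleCat.of R B) n) :
    HasProjectiveDimensionLT (ModuleCat.of R A) n := by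
  have r : Retract (ModuleCat.of R A) (ModuleCat.of R B) :=
    { i := ModuleCat.ofHom i
      r := ModuleCat.ofHom p
      retract := by rw [← ModuleCat.ofHom_comp, hpi]; rfl }
  exact r.hasProjectiveDimensionLT n

lemma hasProjectiveDimensionLT_of_exact {R : Type u} [Ring R] {A B C : Type v} [AddCommGroup A]
    [Module R A] [AddCommGroup B] [Module R B] [AddCommGroup C] [Module R C] {f : A →ₗ[R] B}
    {g : B →ₗ[R] C} (hf : Function.Injective f) (hfg : Function.Exact f g)
    (hg : Function.Surjective g) {n : ℕ} (hA : HasProjectiveDimensionLT (ModuleCat.of R A) n)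
    (hB : HasProjectiveDimensionLT (ModuleCat.of R B) (n + 1)) :
    HasProjectiveDimensionLT (ModuleCat.of R C) (n + 1) :=
  (ModuleCat.shortComplex_shortExact
    (ModuleCat.shortComplexOfCompEqZero f g hfg.linearMap_comp_eq_zero) hfg hf hg
    ).hasProjectiveDimensionLT_X₃ n hA hB

open TensorProduct

lemma hasProjectiveDimensionLT_tensorProduct_of_exact {Z : Type u'} {H : Type u} [CommRing Z]
    [Ring H] [Algebra Z H] {A B C : Type v} [AddCommGroup A] [Module Z A] [AddCommGroup B]
    [Module Z B] [AddCommGroup C] [Module Z C] {f : A →ₗ[Z] B} {g : B →ₗ[Z] C}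
    (hf : Function.Injective (f.lTensor H)) (hfg : Function.Exact f g)
    (hg : Function.Surjective g) {n : ℕ}
    (hA : HasProjectiveDimensionLT (ModuleCat.of H (H ⊗[Z] A)) n)
    (hB : HasProjectiveDimensionLT (ModuleCat.of H (H ⊗[Z] B)) (n + 1)) :
    HasProjectiveDimensionLT (ModuleCat.of H (H ⊗[Z] C)) (n + 1) :=
  hasProjectiveDimensionLT_of_exact (f := f.baseChange H) (g := g.baseChange H) hf
    (lTensor_exact H hfg hg) (LinearMap.lTensor_surjective H hg) hA hB

open Polynomial in
lemma injective_mulLeft_C_mul_X_sub_one {Z : Type*} [CommRing Z] (z : Z) :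
    Function.Injective (LinearMap.mulLeft Z (C z * X - 1 : Z[X])) := by
  have hmem : (C z * X - 1 : Z[X]) ∈ nonZeroDivisors Z[X] := by
    rw [Polynomial.mem_nonZeroDivisors_iff]
    intro a ha
    simpa using congrArg (coeff · 0) ha
  exact (isLeftRegular_iff_mem_nonZeroDivisorsLeft.mpr hmem.1)

-- Resolve `Z[1/z]` by `0 → Z[X] → Z[X] → Z[X] ⧸ (z X - 1) → 0`.
lemma hasProjectiveDimensionLT_tensorProduct_away {Z : Type v} {H : Type u} [CommRing Z]
    [Ring H] [Algebra Z H] (C : Type v) [CommRing C] [Algebra Z C] (z : Z)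
    [IsLocalization.Away z C] :
    HasProjectiveDimensionLT (ModuleCat.of H (H ⊗[Z] C)) 2 := by
  let p : Polynomial Z := Polynomial.C z * Polynomial.X - 1
  let e : AdjoinRoot p ≃ₐ[Z] C := (Localization.awayEquivAdjoin z).symm.trans
    (IsLocalization.algEquiv (Submonoid.powers z) _ _)
  let g : Polynomial Z →ₗ[Z] C := e.toLinearMap ∘ₗ (AdjoinRoot.mkₐ p).toLinearMap
  have hg : Function.Surjective g := e.surjective.comp AdjoinRoot.mk_surjective
  have hpg : Function.Exact (LinearMap.mulLeft Z p) g := by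
    intro q
    change e (AdjoinRoot.mk p q) = 0 ↔ _
    rw [EmbeddingLike.map_eq_zero_iff, AdjoinRoot.mk_eq_zero]
    exact exists_congr fun _ => eq_comm
  have : Module.Flat Z C := IsLocalization.flat C (Submonoid.powers z)
  have hZX : HasProjectiveDimensionLT (ModuleCat.of H (H ⊗[Z] Polynomial Z)) 1 := inferInstance
  exact hasProjectiveDimensionLT_tensorProduct_of_exact
    (LinearMap.lTensor_injective_of_exact_of_flat g hg _ (injective_mulLeft_C_mul_X_sub_one z)
      hpg H) hpg hg hZX (hasProjectiveDimensionLT_of_ge _ 1 2 one_le_two)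

end ProjectiveDimension

section AzumayaFrame

open TensorProduct Pointwise

namespace AzumayaFrame

variable {Z : Type u'} {H : Type u} {ι : Type*} [CommRing Z] [Ring H] [Algebra Z H] [Fintype ι]
  (F : AzumayaFrame Z H ι)

/-- The coordinates of `H ⊗ M` with values in `M` that extend those of the frame. -/
def tensorCoord (M : Type*) [AddCommGroup M] [Module Z M] (i : ι) : H ⊗[Z] M →ₗ[Z] M :=
  TensorProduct.lift ((LinearMap.lsmul Z M).comp (F.coord i))

section

variable {M : Type*} [AddCommGroup M] [Module Z M]

lemma tensorCoord_tmul (i : ι) (h : H) (m : M) :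
    F.tensorCoord M i (h ⊗ₜ m) = F.coord i h • m := by
  simp [tensorCoord]

lemma tensorCoord_lTensor {M' : Type*} [AddCommGroup M'] [Module Z M'] (f : M →ₗ[Z] M') (i : ι)
    (t : H ⊗[Z] M) : F.tensorCoord M' i (f.lTensor H t) = f (F.tensorCoord M i t) := by
  induction t with
  | zero => simp
  | add a b ha hb => simp only [map_add, ha, hb]
  | tmul h m => simp [tensorCoord_tmul]

lemma denom_smul_eq_sum_tmul (t : H ⊗[Z] M) :
    F.denom • t = ∑ i, F.gen i ⊗ₜ F.tensorCoord M i t := by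
  induction t with
  | zero => simp
  | add a b ha hb =>
    simp only [smul_add, ha, hb, map_add, tmul_add, Finset.sum_add_distrib]
  | tmul h m =>
    simp_rw [smul_tmul', F.denom_smul, sum_tmul, tensorCoord_tmul, smul_tmul]

lemma eq_zero_of_tensorCoord_eq_zero (hM : IsSMulRegular (H ⊗[Z] M) F.denom) {t : H ⊗[Z] M}
    (ht : ∀ i, F.tensorCoord M i t = 0) : t = 0 :=
  hM.right_eq_zero_of_smul (by simp [denom_smul_eq_sum_tmul, ht])

lemma lTensor_injective {M' : Type*} [AddCommGroup M'] [Module Z M']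
    (hM : IsSMulRegular (H ⊗[Z] M) F.denom) {f : M →ₗ[Z] M'} (hf : Function.Injective f) :
    Function.Injective (f.lTensor H) := by
  refine (injective_iff_map_eq_zero _).2 fun t ht => F.eq_zero_of_tensorCoord_eq_zero hM fun i => ?_
  apply hf
  rw [← tensorCoord_lTensor, ht, map_zero, map_zero]

end

variable {C : Type*} [CommRing C] [Algebra Z C] (hC : IsUnit (algebraMap Z C F.denom))

include hC

lemma bijective_denom_smul (M : Type*) [AddCommGroup M] [Module Z M] [Module C M]
    [IsScalarTower Z C M] : Function.Bijective (F.denom • · : H ⊗[Z] M → H ⊗[Z] M) := by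
  have h : IsUnit (algebraMap Z (Module.End Z (H ⊗[Z] M)) F.denom) := by
    simpa using (hC.map (Algebra.lsmul Z Z M)).map (Module.End.lTensorAlgHom Z M H)
  exact (Module.End.isUnit_iff _).1 h

lemma hasProjectiveDimensionLT_quotSMulTop {M : Type v} [AddCommGroup M] [Module Z M]
    [Module C M] [IsScalarTower Z C M] {s : C} (hs : IsSMulRegular M s) {n : ℕ}
    (hM : HasProjectiveDimensionLT (ModuleCat.of H (H ⊗[Z] M)) n) :
    HasProjectiveDimensionLT (ModuleCat.of H (H ⊗[Z] QuotSMulTop s M)) (n + 1) := by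
  let f : M →ₗ[Z] M := (LinearMap.lsmul C M s).restrictScalars Z
  let g : M →ₗ[Z] QuotSMulTop s M := (s • (⊤ : Submodule C M)).mkQ.restrictScalars Z
  have hf : Function.Injective (f.lTensor H) :=
    F.lTensor_injective (F.bijective_denom_smul hC M).injective hs
  have hfg : Function.Exact f g := LinearMap.exact_lsmul_mkQ_smul_top M s
  exact hasProjectiveDimensionLT_tensorProduct_of_exact hf hfg
    (Submodule.mkQ_surjective (s • (⊤ : Submodule C M))) hM
    (hasProjectiveDimensionLT_of_ge _ n (n + 1) n.le_succ)

theorem hasProjectiveDimensionLT_quotient_of_isWeaklyRegular (rs : List C) {M : Type v}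
    [AddCommGroup M] [Module Z M] [Module C M] [IsScalarTower Z C M]
    (hrs : RingTheory.Sequence.IsWeaklyRegular M rs) {n : ℕ}
    (hM : HasProjectiveDimensionLT (ModuleCat.of H (H ⊗[Z] M)) n) :
    HasProjectiveDimensionLT
      (ModuleCat.of H (H ⊗[Z] (M ⧸ (Ideal.ofList rs • ⊤ : Submodule C M)))) (n + rs.length) := by
  induction rs generalizing M n with
  | nil =>
    let e : (M ⧸ (Ideal.ofList ([] : List C) • ⊤ : Submodule C M)) ≃ₗ[C] M :=
      Submodule.quotEquivOfEqBot _ (by simp)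
    exact hasProjectiveDimensionLT_of_iso
      ((e.restrictScalars Z).symm.baseChange Z H _ _).toModuleIso n
  | cons r rs ih =>
    rw [RingTheory.Sequence.isWeaklyRegular_cons_iff] at hrs
    let e := Submodule.quotOfListConsSMulTopEquivQuotSMulTopInner M r rs
    rw [List.length_cons, add_comm rs.length, ← add_assoc]
    have := ih hrs.2 (F.hasProjectiveDimensionLT_quotSMulTop hC hrs.1 hM)
    exact hasProjectiveDimensionLT_of_iso
      ((e.restrictScalars Z).symm.baseChange Z H _ _).toModuleIso _

end AzumayaFrame

end AzumayaFrame

section Hopf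

open TensorProduct Coalgebra HopfAlgebra

variable {k : Type u'} [CommRing k] {H : Type u} [Ring H] [HopfAlgebra k H]

section Sweedler

open WithConv Algebra.TensorProduct

variable (k H) in
lemma toConv_includeLeft_mul_toConv_includeRight :
    toConv (includeLeft (R := k) (S := k) (A := H) (B := H)).toLinearMap *
      toConv (includeRight (R := k) (A := H) (B := H)).toLinearMap = toConv comul := by
  ext h
  simp [(ℛ k h).convMul_apply, (ℛ k h).eq]

lemma sum_comul_mul_one_tmul_antipode {h : H} {ι : Type*} (r : Repr k h ι) :
    ∑ i ∈ r.index, comul (r.left i) * (1 ⊗ₜ[k] antipode k (r.right i)) = h ⊗ₜ[k] (1 : H) := by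
  let ι₁ := (includeLeft (R := k) (S := k) (A := H) (B := H)).toLinearMap
  let ι₂ := (includeRight (R := k) (A := H) (B := H)).toLinearMap
  have hinv : toConv ι₂ * toConv (ι₂ ∘ₗ antipode k) = 1 := by
    ext h
    have := congrArg (fun a : H => (1 : H) ⊗ₜ[k] a) (sum_mul_antipode_eq_smul (ℛ k h))
    simpa [(ℛ k h).convMul_apply, ι₂, tmul_sum, Algebra.algebraMap_eq_smul_one,
      one_def] using this
  have key : toConv comul * toConv (ι₂ ∘ₗ antipode k) = toConv ι₁ := by
    rw [← toConv_includeLeft_mul_toConv_includeRight, mul_assoc, hinv, mul_one]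
  simpa [r.convMul_apply, ι₁, ι₂] using congrArg (fun f => f.ofConv h) key

lemma sum_lTensor_antipode_comul_mul_one_tmul {h : H} {ι : Type*} (r : Repr k h ι) :
    ∑ i ∈ r.index, (antipode k).lTensor H (comul (r.left i)) * (1 ⊗ₜ[k] r.right i) =
      h ⊗ₜ[k] (1 : H) := by
  let ι₁ := (includeLeft (R := k) (S := k) (A := H) (B := H)).toLinearMap
  let ι₂ := (includeRight (R := k) (A := H) (B := H)).toLinearMap
  have hinv : toConv (ι₂ ∘ₗ antipode k) * toConv ι₂ = 1 := by
    ext h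
    have := congrArg (fun a : H => (1 : H) ⊗ₜ[k] a) (sum_antipode_mul_eq_smul (ℛ k h))
    simpa [(ℛ k h).convMul_apply, ι₂, tmul_sum, Algebra.algebraMap_eq_smul_one,
      one_def] using this
  have hleft : toConv ι₁ * toConv (ι₂ ∘ₗ antipode k) =
      toConv ((antipode k).lTensor H ∘ₗ comul) := by
    ext h
    simp [(ℛ k h).convMul_apply, ι₁, ι₂, ← (ℛ k h).eq]
  have key : toConv ((antipode k).lTensor H ∘ₗ comul) * toConv ι₂ = toConv ι₁ := by
    rw [← hleft, mul_assoc, hinv, mul_one]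
  simpa [r.convMul_apply, ι₁, ι₂] using congrArg (fun f => f.ofConv h) key

lemma sum_right_mul_antipode_left
    (hS : ∀ h : H, antipode k (antipode k h) = h) {h : H} {ι : Type*} (r : Repr k h ι) :
    ∑ i ∈ r.index, antipode k (r.right i) * r.left i = counit (R := k) h • (1 : H) := by
  simpa [antipode_mul_antidistrib, hS] using
    congrArg (antipode k) (sum_antipode_mul_eq_smul r)

end Sweedler

section Representation

variable {M : Type w} [AddCommGroup M] [Module k M] {N : Type v} [AddCommGroup N] [Module k N]

/-- The `H`-module with underlying `k`-module `M` given by the representation `ρ`. -/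
@[nolint unusedArguments]
def RepresentationModule (_ρ : H →ₐ[k] Module.End k M) : Type w := M

namespace RepresentationModule

noncomputable instance (ρ : H →ₐ[k] Module.End k M) : AddCommGroup (RepresentationModule ρ) :=
  inferInstanceAs (AddCommGroup M)

noncomputable instance (ρ : H →ₐ[k] Module.End k M) : Module k (RepresentationModule ρ) :=
  inferInstanceAs (Module k M)

noncomputable instance (ρ : H →ₐ[k] Module.End k M) : Module H (RepresentationModule ρ) :=
  Module.compHom M ρ.toRingHom

lemma smul_def {ρ : H →ₐ[k] Module.End k M} (h : H) (m : RepresentationModule ρ) :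
    h • m = (ρ h (m : M) : M) := rfl

instance (ρ : H →ₐ[k] Module.End k M) : IsScalarTower k H (RepresentationModule ρ) where
  smul_assoc c h m := by simp [smul_def]; rfl

end RepresentationModule

end Representation

section DiagonalTensor

variable (X : Type v) [AddCommGroup X] [Module k X] [Module H X] [IsScalarTower k H X]
  {W : Type w} [AddCommGroup W] [Module k W] (τ : H →ₐ[k] Module.End k W)

/-- `a ⊗ b` acts on `X ⊗ W` by `x ⊗ w ↦ a • x ⊗ τ b w`. -/
noncomputable def outerTensorAction : H ⊗[k] H →ₐ[k] Module.End k (X ⊗[k] W) :=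
  (Module.endTensorEndAlgHom (R := k) (S := k) (A := k)).comp
    (Algebra.TensorProduct.map (Algebra.lsmul k k X) τ)

@[simp]
lemma outerTensorAction_tmul (a b : H) (x : X) (y : W) :
    outerTensorAction X τ (a ⊗ₜ b) (x ⊗ₜ y) = (a • x) ⊗ₜ τ b y := by
  simp [outerTensorAction, Module.endTensorEndAlgHom_apply]

/-- The tensor product of the representations `X` and `τ`: `h • (x ⊗ w) = ∑ h₁ • x ⊗ τ h₂ w`. -/
noncomputable def diagonalAction : H →ₐ[k] Module.End k (X ⊗[k] W) :=
  (outerTensorAction X τ).comp (Bialgebra.comulAlgHom k H)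

lemma diagonalAction_apply (h : H) :
    diagonalAction X τ h = outerTensorAction X τ (comul h) := rfl

lemma diagonalAction_tmul {h : H} {ι : Type*} (r : Repr k h ι) (x : X) (y : W) :
    diagonalAction X τ h (x ⊗ₜ y) = ∑ i ∈ r.index, (r.left i • x) ⊗ₜ τ (r.right i) y := by
  simp [diagonalAction_apply, ← r.eq, LinearMap.sum_apply]

variable {X} {Y : Type u2} [AddCommGroup Y] [Module k Y] [Module H Y]

lemma lift_diagonalAction (g : X →ₗ[k] W →ₗ[k] Y)
    (hg : ∀ (h : H) (x : X) (y : W),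
      TensorProduct.lift g (diagonalAction X τ h (x ⊗ₜ y)) = h • g x y) (h : H) (z : X ⊗[k] W) :
    TensorProduct.lift g (diagonalAction X τ h z) = h • TensorProduct.lift g z := by
  induction z with
  | zero => simp
  | add s t hs ht => simp only [map_add, smul_add, hs, ht]
  | tmul x y => exact hg h x y

/-- The `H`-linear map on `X ⊗ W` induced by a bilinear map that is equivariant on pure
tensors. -/
noncomputable def diagonalHom (g : X →ₗ[k] W →ₗ[k] Y)
    (hg : ∀ (h : H) (x : X) (y : W),
      TensorProduct.lift g (diagonalAction X τ h (x ⊗ₜ y)) = h • g x y) :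
    RepresentationModule (diagonalAction X τ) →ₗ[H] Y where
  __ := TensorProduct.lift g
  map_smul' := lift_diagonalAction τ g hg

variable [IsScalarTower k H Y]

lemma rTensor_outerTensorAction (f : X →ₗ[H] Y) (t : H ⊗[k] H) (z : X ⊗[k] W) :
    (f.restrictScalars k).rTensor W (outerTensorAction X τ t z) =
      outerTensorAction Y τ t ((f.restrictScalars k).rTensor W z) := by
  induction t with
  | zero => simp
  | add a b ha hb => simp only [map_add, LinearMap.add_apply, ha, hb]
  | tmul a b =>
    induction z with
    | zero => simp
    | add s t hs ht => simp only [map_add, hs, ht]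
    | tmul x y => simp

/-- The functor `X ↦ X ⊗ W` on maps, for the diagonal action. -/
noncomputable def diagonalMap (f : X →ₗ[H] Y) :
    RepresentationModule (diagonalAction X τ) →ₗ[H] RepresentationModule (diagonalAction Y τ) where
  __ := (f.restrictScalars k).rTensor W
  map_smul' _ z := rTensor_outerTensorAction τ f _ z

lemma diagonal_hom_ext {f g : RepresentationModule (diagonalAction X τ) →ₗ[H] Y}
    (h : ∀ (x : X) (y : W), f (x ⊗ₜ[k] y : X ⊗[k] W) = g (x ⊗ₜ[k] y : X ⊗[k] W)) : f = g := by
  let f' : X ⊗[k] W →ₗ[k] Y := f.restrictScalars k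
  let g' : X ⊗[k] W →ₗ[k] Y := g.restrictScalars k
  have hfg : f' = g' := TensorProduct.ext' h
  exact LinearMap.ext (LinearMap.congr_fun hfg :)

lemma diagonalMap_exact {Z : Type*} [AddCommGroup Z] [Module k Z] [Module H Z]
    [IsScalarTower k H Z] {f : X →ₗ[H] Y} {g : Y →ₗ[H] Z} (hfg : Function.Exact f g)
    (hg : Function.Surjective g) : Function.Exact (diagonalMap τ f) (diagonalMap τ g) :=
  rTensor_exact W (f := f.restrictScalars k) (g := g.restrictScalars k) hfg hg

end DiagonalTensor

section InternalHom

variable {W : Type w} [AddCommGroup W] [Module k W] (τ : H →ₐ[k] Module.End k W)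
  (Y : Type u2) [AddCommGroup Y] [Module k Y]

/-- `h` acts on `f : W →ₗ[k] Y` by `f ∘ τ (S h)`; for `Y = k` this is the dual of `τ`. -/
noncomputable def antipodePrecomp : H →ₐ[k] Module.End k (W →ₗ[k] Y) :=
  AlgHom.ofLinearMap
    ((LinearMap.llcomp k W W Y).flip ∘ₗ τ.toLinearMap ∘ₗ antipode k)
    (by ext; simp)
    (fun a b => by ext; simp [antipode_mul_antidistrib])

@[simp]
lemma antipodePrecomp_apply (h : H) (f : W →ₗ[k] Y) (y : W) :
    antipodePrecomp τ Y h f y = f (τ (antipode k h) y) := rfl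

variable [Module H Y] [IsScalarTower k H Y]

/-- `a ⊗ b` acts on `f : W →ₗ[k] Y` by `a • f ∘ τ (S b)`. -/
noncomputable def outerHomAction : H ⊗[k] H →ₐ[k] Module.End k (W →ₗ[k] Y) :=
  Algebra.TensorProduct.lift (Algebra.lsmul k k (W →ₗ[k] Y)) (antipodePrecomp τ Y)
    fun a b => by ext; simp

@[simp]
lemma outerHomAction_tmul (a b : H) (f : W →ₗ[k] Y) (y : W) :
    outerHomAction τ Y (a ⊗ₜ b) f y = a • f (τ (antipode k b) y) :=
  LinearMap.congr_fun (LinearMap.congr_fun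
    (Algebra.TensorProduct.lift_tmul _ _ _ a b) f) y

/-- The internal Hom of representations: `h • f = ∑ h₁ • f ∘ τ (S h₂)`. -/
noncomputable def internalHomAction : H →ₐ[k] Module.End k (W →ₗ[k] Y) :=
  (outerHomAction τ Y).comp (Bialgebra.comulAlgHom k H)

lemma internalHomAction_apply (h : H) :
    internalHomAction τ Y h = outerHomAction τ Y (comul h) := rfl

lemma internalHomAction_apply_apply {h : H} {ι : Type*} (r : Repr k h ι) (f : W →ₗ[k] Y) (y : W) :
    internalHomAction τ Y h f y =
      ∑ i ∈ r.index, r.left i • f (τ (antipode k (r.right i)) y) := by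
  simp [internalHomAction_apply, ← r.eq, LinearMap.sum_apply]

end InternalHom

section Adjunction

variable {X : Type v} [AddCommGroup X] [Module k X] [Module H X] [IsScalarTower k H X]
  {Y : Type u2} [AddCommGroup Y] [Module k Y] [Module H Y] [IsScalarTower k H Y]
  {W : Type w} [AddCommGroup W] [Module k W] (τ : H →ₐ[k] Module.End k W)

lemma sum_outerTensorAction_comul_antipode {h : H} {ι : Type*} (r : Repr k h ι) (x : X) (y : W) :
    ∑ i ∈ r.index, outerTensorAction X τ (comul (r.left i)) (x ⊗ₜ τ (antipode k (r.right i)) y) =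
      (h • x) ⊗ₜ y := by
  have := congrArg (fun t => outerTensorAction X τ t (x ⊗ₜ y)) (sum_comul_mul_one_tmul_antipode r)
  simpa [LinearMap.sum_apply] using this

variable (X) in
/-- The unit `X → Hom(W, X ⊗ W)` of the adjunction between diagonal tensor products and internal
Hom. -/
noncomputable def internalHomUnit :
    X →ₗ[H] RepresentationModule
      (internalHomAction τ (RepresentationModule (diagonalAction X τ))) where
  __ := TensorProduct.mk k X W
  map_smul' h x := by
    let D := RepresentationModule (diagonalAction X τ)
    let f : W →ₗ[k] D := TensorProduct.mk k X W x
    exact LinearMap.ext fun y => ((internalHomAction_apply_apply τ D (ℛ k h) f y).trans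
      (sum_outerTensorAction_comul_antipode τ (ℛ k h) x y)).symm

lemma lift_diagonalAction_tmul (g : X →ₗ[k] W →ₗ[k] Y)
    (hg : ∀ (a : H) (x : X), g (a • x) = internalHomAction τ Y a (g x)) (h : H) (x : X) (y : W) :
    TensorProduct.lift g (diagonalAction X τ h (x ⊗ₜ y)) = h • g x y := by
  let r := ℛ k h
  let β : H ⊗[k] H →ₗ[k] Y := TensorProduct.lift
    ((Algebra.lsmul k k Y).toLinearMap.flip ∘ₗ g x ∘ₗ τ.toLinearMap.flip y).flip
  calc TensorProduct.lift g (diagonalAction X τ h (x ⊗ₜ y))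
      = ∑ i ∈ r.index, internalHomAction τ Y (r.left i) (g x) (τ (r.right i) y) := by
        simp [diagonalAction_tmul X τ r, hg]
    _ = β (∑ i ∈ r.index, (antipode k).lTensor H (comul (r.left i)) * (1 ⊗ₜ r.right i)) := by
        rw [map_sum]
        refine Finset.sum_congr rfl fun i _ => ?_
        let s := ℛ k (r.left i)
        simp [internalHomAction_apply_apply τ Y s, ← s.eq, β, Finset.sum_mul]
    _ = h • g x y := by simp [sum_lTensor_antipode_comul_mul_one_tmul, β]

/-- The map `X ⊗ W → Y` adjoint to `X → Hom(W, Y)`. -/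
noncomputable def diagonalLift (g : X →ₗ[H] RepresentationModule (internalHomAction τ Y)) :
    RepresentationModule (diagonalAction X τ) →ₗ[H] Y :=
  diagonalHom τ (g.restrictScalars k)
    (lift_diagonalAction_tmul τ (g.restrictScalars k) g.map_smul)

variable {Z : Type*} [AddCommGroup Z] [Module k Z] [Module H Z] [IsScalarTower k H Z]

lemma comp_outerHomAction (f : Y →ₗ[H] Z) (t : H ⊗[k] H) (g : W →ₗ[k] Y) :
    f.restrictScalars k ∘ₗ outerHomAction τ Y t g =
      outerHomAction τ Z t (f.restrictScalars k ∘ₗ g) := by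
  induction t with
  | zero => simp
  | add a b ha hb => simp only [map_add, LinearMap.add_apply, LinearMap.comp_add, ha, hb]
  | tmul a b => ext; simp

/-- The functor `Y ↦ Hom(W, Y)` on maps, for the internal Hom action. -/
noncomputable def internalHomMap (f : Y →ₗ[H] Z) :
    RepresentationModule (internalHomAction τ Y) →ₗ[H]
      RepresentationModule (internalHomAction τ Z) where
  __ := LinearMap.llcomp k W Y Z (f.restrictScalars k)
  map_smul' h g := comp_outerHomAction τ f (comul h) g

lemma internalHomMap_surjective [Module.Projective k W] {f : Y →ₗ[H] Z}
    (hf : Function.Surjective f) : Function.Surjective (internalHomMap τ f) :=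
  fun g => Module.projective_lifting_property (f.restrictScalars k) g hf

end Adjunction

section ProjectiveDimension

variable (X : Type v) [AddCommGroup X] [Module k X] [Module H X] [IsScalarTower k H X]
  {W : Type w} [AddCommGroup W] [Module k W] (τ : H →ₐ[k] Module.End k W)

-- `X ↦ X ⊗ W` preserves projectives because its right adjoint `Y ↦ Hom(W, Y)` is exact.
instance [Module.Projective k W] [Module.Projective H X] :
    Module.Projective H (RepresentationModule (diagonalAction X τ)) := by
  refine .of_lifting_property'' fun f hf => ?_
  obtain ⟨g, hg⟩ := Module.projective_lifting_property (internalHomMap τ f)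
    (internalHomUnit X τ) (internalHomMap_surjective τ hf)
  exact ⟨diagonalLift τ g, diagonal_hom_ext τ fun x y =>
    LinearMap.congr_fun (LinearMap.congr_fun hg x) y⟩

theorem hasProjectiveDimensionLT_diagonalAction [Module.Projective k W] (n : ℕ) :
    ∀ (X : Type (max u v)) [AddCommGroup X] [Module k X] [Module H X] [IsScalarTower k H X],
      HasProjectiveDimensionLT (ModuleCat.of H X) (n + 1) →
        HasProjectiveDimensionLT
          (ModuleCat.of H (RepresentationModule (diagonalAction X τ))) (n + 1) := by
  induction n with
  | zero =>
    intro X _ _ _ _ hX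
    have : Module.Projective H X := (IsProjective.iff_projective X).2
      (projective_iff_hasProjectiveDimensionLT_one.2 hX)
    infer_instance
  | succ n ih =>
    intro X _ _ _ _ hX
    let p := Finsupp.linearCombination H (id : X → X)
    have hp : Function.Surjective p := Finsupp.linearCombination_id_surjective H X
    have hK : HasProjectiveDimensionLT (ModuleCat.of H (LinearMap.ker p)) (n + 1) := by
      have hF : Projective (ModuleCat.of H (X →₀ H)) := inferInstance
      exact ((p.shortExact_shortComplexKer hp).hasProjectiveDimensionLT_X₃_iff n hF).1 hX
    refine hasProjectiveDimensionLT_of_exact (f := diagonalMap τ (LinearMap.ker p).subtype)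
      (g := diagonalMap τ p) ?_ ?_ ?_ (ih _ hK) (hasProjectiveDimensionLT_of_ge _ 1 _ (by omega))
    · exact Module.Flat.rTensor_preserves_injective_linearMap _ (Submodule.subtype_injective _)
    · exact diagonalMap_exact τ p.exact_subtype_ker_map hp
    · exact LinearMap.rTensor_surjective W hp

end ProjectiveDimension

section InvariantVector

variable {M : Type v} [AddCommGroup M] [Module k M] [Module H M] [IsScalarTower k H M]
  (X : Type w) [AddCommGroup X] [Module k X] [Module H X] [IsScalarTower k H X]

/-- For an invariant vector `c`, the map `X → M ⊗ X`, `x ↦ c ⊗ x`. -/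
noncomputable def tmulInvariant (c : M) (hc : ∀ h : H, h • c = counit (R := k) h • c) :
    X →ₗ[H] RepresentationModule (diagonalAction M (Algebra.lsmul k k X : H →ₐ[k] _)) where
  __ := TensorProduct.mk k M X c
  map_smul' h x := by
    refine Eq.trans ?_ (diagonalAction_tmul M (Algebra.lsmul k k X) (ℛ k h) c x).symm
    simp only [hc, smul_tmul, ← tmul_sum, Algebra.lsmul_coe, ← smul_assoc, ← Finset.sum_smul,
      sum_counit_smul]
    rfl

/-- For an invariant functional `l`, the map `M ⊗ X → X`, `m ⊗ x ↦ l m • x`. -/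
noncomputable def contractInvariant (l : M →ₗ[k] k)
    (hl : ∀ (h : H) (m : M), l (h • m) = counit (R := k) h * l m) :
    RepresentationModule (diagonalAction M (Algebra.lsmul k k X : H →ₐ[k] _)) →ₗ[H] X :=
  diagonalHom _ (LinearMap.lsmul k X ∘ₗ l) fun h m x => by
    let r := ℛ k h
    calc _ = ∑ i ∈ r.index, l m • (counit (R := k) (r.left i) • r.right i) • x := by
          simp [diagonalAction_tmul M _ r, hl, mul_comm _ (l m), mul_smul]
      _ = l m • h • x := by rw [← Finset.smul_sum, ← Finset.sum_smul, sum_counit_smul]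
      _ = h • l m • x := smul_comm _ _ _

end InvariantVector

section Trace

variable (k : Type u') [CommRing k] {H : Type u} [Ring H] [HopfAlgebra k H]
  (V : Type v) [AddCommGroup V] [Module k V]

/-- The map `V ⊗ V* → End V`, `v ⊗ f ↦ (y ↦ f y • v)`. -/
noncomputable def tensorDualToEnd : V ⊗[k] (V →ₗ[k] k) →ₗ[k] Module.End k V :=
  dualTensorHom k V V ∘ₗ (TensorProduct.comm k V (V →ₗ[k] k)).toLinearMap

lemma tensorDualToEnd_bijective [Module.Free k V] [Module.Finite k V] :
    Function.Bijective (tensorDualToEnd k V) :=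
  ((TensorProduct.comm k V (V →ₗ[k] k)).trans (dualTensorHomEquiv k V V)).bijective

variable {V} [Module H V] [IsScalarTower k H V]

variable (H V) in
/-- The dual of `V`, with `h` acting as the transpose of `S h`. -/
noncomputable def dualAction : H →ₐ[k] Module.End k (V →ₗ[k] k) :=
  antipodePrecomp (Algebra.lsmul k k V) k

variable {k}

lemma tensorDualToEnd_outerTensorAction (a b : H) (m : V ⊗[k] (V →ₗ[k] k)) :
    tensorDualToEnd k V (outerTensorAction V (dualAction k H V) (a ⊗ₜ b) m) =
      Algebra.lsmul k k V a * tensorDualToEnd k V m * Algebra.lsmul k k V (antipode k b) := by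
  induction m with
  | zero => simp
  | add s t hs ht => rw [map_add, map_add, map_add, hs, ht, mul_add, add_mul]
  | tmul v f =>
    ext y
    simp [tensorDualToEnd, dualAction, smul_comm _ a]

lemma tensorDualToEnd_diagonalAction {h : H} {ι : Type*} (r : Repr k h ι)
    (m : V ⊗[k] (V →ₗ[k] k)) :
    tensorDualToEnd k V (diagonalAction V (dualAction k H V) h m) =
      ∑ i ∈ r.index, Algebra.lsmul k k V (r.left i) * tensorDualToEnd k V m *
        Algebra.lsmul k k V (antipode k (r.right i)) := by
  rw [diagonalAction_apply, ← r.eq, map_sum, LinearMap.sum_apply, map_sum]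
  simp only [tensorDualToEnd_outerTensorAction]

lemma tensorDualToEnd_diagonalAction_of_eq_one {c : V ⊗[k] (V →ₗ[k] k)}
    (hc : tensorDualToEnd k V c = 1) (h : H) :
    tensorDualToEnd k V (diagonalAction V (dualAction k H V) h c) = counit (R := k) h • 1 := by
  simp only [tensorDualToEnd_diagonalAction (ℛ k h), hc, mul_one, ← map_mul, ← map_sum,
    sum_mul_antipode_eq_smul, map_smul, map_one]

lemma trace_tensorDualToEnd_diagonalAction (hS : ∀ h : H, antipode k (antipode k h) = h) (h : H)
    (m : V ⊗[k] (V →ₗ[k] k)) :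
    LinearMap.trace k V (tensorDualToEnd k V (diagonalAction V (dualAction k H V) h m)) =
      counit (R := k) h * LinearMap.trace k V (tensorDualToEnd k V m) := by
  let r := ℛ k h
  let φ := tensorDualToEnd k V m
  let ρ := Algebra.lsmul k k V (A := H)
  calc LinearMap.trace k V (tensorDualToEnd k V (diagonalAction V (dualAction k H V) h m))
      = ∑ i ∈ r.index, LinearMap.trace k V (ρ (r.left i) * φ * ρ (antipode k (r.right i))) := by
        rw [tensorDualToEnd_diagonalAction r, map_sum]
    _ = ∑ i ∈ r.index, LinearMap.trace k V (ρ (antipode k (r.right i) * r.left i) * φ) :=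
        Finset.sum_congr rfl fun i _ => by
          rw [LinearMap.trace_mul_comm, ← mul_assoc, map_mul ρ]
    _ = LinearMap.trace k V (ρ (counit (R := k) h • 1) * φ) := by
        rw [← map_sum, ← Finset.sum_mul, ← map_sum, sum_right_mul_antipode_left hS]
    _ = _ := by simp [φ]

end Trace

-- `M = V ⊗ V* ≅ End V` has the invariant vector `1` and, since `S² = 1`, the invariant functional
-- `tr`. As `tr 1 ≠ 0`, `X` is a direct summand of `M ⊗ X`.
theorem hasProjectiveDimensionLT_of_finrank_ne_zero {k : Type u'} [Field k] {H : Type u} [Ring H]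
    [HopfAlgebra k H] (hS : ∀ h : H, antipode k (antipode k h) = h)
    {V : Type u} [AddCommGroup V] [Module k V] [Module H V] [IsScalarTower k H V]
    [FiniteDimensional k V] (hV : (Module.finrank k V : k) ≠ 0) {n : ℕ}
    (hn : HasProjectiveDimensionLT (ModuleCat.of H V) (n + 1))
    (X : Type (max u u')) [AddCommGroup X] [Module k X] [Module H X] [IsScalarTower k H X] :
    HasProjectiveDimensionLT (ModuleCat.of H X) (n + 1) := by
  let M := RepresentationModule (diagonalAction V (dualAction k H V))
  let θ : M →ₗ[k] Module.End k V := tensorDualToEnd k V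
  obtain ⟨hθ, hθ'⟩ : Function.Bijective θ := tensorDualToEnd_bijective k V
  obtain ⟨c, hc⟩ := hθ' 1
  let l : M →ₗ[k] k := (Module.finrank k V : k)⁻¹ • LinearMap.trace k V ∘ₗ θ
  have hinv (h : H) : h • c = counit (R := k) h • c := hθ <|
    (tensorDualToEnd_diagonalAction_of_eq_one hc h).trans (by rw [map_smul, hc])
  have hl (h : H) (m : M) : l (h • m) = counit (R := k) h * l m :=
    (congrArg (_ * ·) (trace_tensorDualToEnd_diagonalAction hS h m)).trans (mul_left_comm _ _ _)
  have hM : HasProjectiveDimensionLT (ModuleCat.of H M) (n + 1) :=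
    hasProjectiveDimensionLT_diagonalAction (dualAction k H V) n V hn
  refine hasProjectiveDimensionLT_of_comp_eq_id (tmulInvariant X c hinv)
    (contractInvariant X l hl) (LinearMap.ext fun x => ?_)
    (hasProjectiveDimensionLT_diagonalAction (Algebra.lsmul k k X) n M hM)
  change l c • x = x
  simp [l, hc, hV]

end Hopf

section Fibers

open TensorProduct

lemma isSemisimpleModule_tensorProduct_of_surjective {Z H D : Type*} [CommRing Z] [Ring H]
    [Algebra Z H] [CommRing D] [Algebra Z D] [IsSemisimpleRing (H ⊗[Z] D)]
    (hZD : Function.Surjective (algebraMap Z D)) : IsSemisimpleModule H (H ⊗[Z] D) := by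
  let σ : H →+* H ⊗[Z] D := Algebra.TensorProduct.includeLeftRingHom
  have : RingHomSurjective σ := ⟨Algebra.TensorProduct.includeLeft_surjective Z H hZD⟩
  let e : (H ⊗[Z] D) →ₛₗ[σ] (H ⊗[Z] D) :=
    { AddMonoidHom.id (H ⊗[Z] D) with
      map_smul' := fun h t => calc
        h • t = (h • (1 : H ⊗[Z] D)) * t := (smul_one_mul h t).symm
        _ = (h ⊗ₜ 1) * t := by
          rw [Algebra.TensorProduct.one_def, smul_tmul', smul_eq_mul, mul_one] }
  exact (e.isSemisimpleModule_iff_of_bijective Function.bijective_id).2 inferInstance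

lemma finrank_dvd_finrank_of_ker_smul_eq_zero {k Z E V : Type*} [Field k] [CommRing Z] [Field E]
    [Algebra k Z] [Algebra k E] [Algebra Z E] [IsScalarTower k Z E] [AddCommGroup V] [Module k V]
    [Module Z V] [IsScalarTower k Z V] (hZE : Function.Surjective (algebraMap Z E))
    (hV : ∀ z ∈ RingHom.ker (algebraMap Z E), ∀ v : V, z • v = 0) :
    Module.finrank k E ∣ Module.finrank k V := by
  have hker : RingHom.ker (algebraMap Z E) ≤ RingHom.ker (algebraMap Z (Module.End Z V)) :=
    fun z hz => LinearMap.ext fun v => hV z hz v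
  let act : E →+* Module.End Z V := RingHom.liftOfSurjective _ hZE ⟨_, hker⟩
  let : Module E V := Module.compHom V act
  have : IsScalarTower k E V := IsScalarTower.of_algebraMap_smul fun r v => by
    rw [IsScalarTower.algebraMap_apply k Z E, ← algebraMap_smul Z r v]
    exact LinearMap.congr_fun
      (RingHom.liftOfSurjective_comp_apply _ hZE ⟨_, hker⟩ (algebraMap k Z r)) v
  exact ⟨_, (Module.finrank_mul_finrank k E V).symm⟩

lemma algebraMap_surjective_of_away (k : Type*) [Field k] {Z C D : Type*} [CommRing Z] [CommRing C]
    [CommRing D] [Algebra k Z] [Algebra Z C] [Algebra Z D] [Algebra k D] [Algebra C D]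
    [IsScalarTower k Z D] [IsScalarTower Z C D] [Module.Finite k D] (f : Z)
    [IsLocalization.Away f C] (hCD : Function.Surjective (algebraMap C D)) :
    Function.Surjective (algebraMap Z D) := by
  let R := (IsScalarTower.toAlgHom k Z D).range
  have : IsArtinianRing R := IsArtinianRing.of_finite k _
  let φ : R := ⟨algebraMap Z D f, f, rfl⟩
  have hφ : (φ : D) * algebraMap C D (IsLocalization.Away.invSelf f) = 1 := by
    rw [← map_one (algebraMap C D), ← IsLocalization.Away.mul_invSelf (S := C) f, map_mul,
      ← IsScalarTower.algebraMap_apply]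
  have hreg : φ ∈ nonZeroDivisors R := mem_nonZeroDivisors_of_injective
    (f := R.subtype) Subtype.val_injective (IsUnit.of_mul_eq_one _ hφ).mem_nonZeroDivisors
  obtain ⟨⟨_, g, rfl⟩, hg⟩ := (IsArtinianRing.isUnit_of_mem_nonZeroDivisors hreg).exists_right_inv
  have hfg : algebraMap Z D f * algebraMap Z D g = 1 := congrArg Subtype.val hg
  intro d
  obtain ⟨y, rfl⟩ := hCD d
  obtain ⟨n, a, ha⟩ := IsLocalization.Away.surj f y
  have hya := congrArg (algebraMap C D) ha
  rw [map_mul, map_pow, ← IsScalarTower.algebraMap_apply, ← IsScalarTower.algebraMap_apply] at hya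
  refine ⟨a * g ^ n, ?_⟩
  rw [map_mul, map_pow, ← hya, mul_assoc, ← mul_pow, hfg, one_pow, mul_one]

namespace AzumayaFrame

variable {Z H ι : Type*} [CommRing Z] [Ring H] [Algebra Z H] [Fintype ι] (F : AzumayaFrame Z H ι)

section

variable {D : Type*} [CommRing D] [Algebra Z D]

lemma one_tmul_tensorCoord (i : ι) (t : H ⊗[Z] D) :
    (1 : H) ⊗ₜ[Z] F.tensorCoord D i t =
      ∑ j, (F.dual j ⊗ₜ 1) * t * ((F.dual i * F.gen j) ⊗ₜ 1) := by
  induction t with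
  | zero => simp
  | add a b ha hb => simp only [map_add, tmul_add, ha, hb, mul_add, add_mul, Finset.sum_add_distrib]
  | tmul h d =>
    rw [tensorCoord_tmul, ← smul_tmul, ← Algebra.algebraMap_eq_smul_one, F.algebraMap_coord,
      sum_tmul]
    simp only [Algebra.TensorProduct.tmul_mul_tmul, one_mul, mul_one, mul_assoc]

variable (hD : IsUnit (algebraMap Z D F.denom))

include hD

lemma includeRight_injective [Nonempty ι] :
    Function.Injective (Algebra.TensorProduct.includeRight : D →ₐ[Z] H ⊗[Z] D) := by
  obtain ⟨i⟩ := ‹Nonempty ι›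
  refine (injective_iff_map_eq_zero _).2 fun d hd => ?_
  have h : F.tensorCoord D i ((F.gen i ⊗ₜ 1) * (1 ⊗ₜ d)) = 0 := by
    rw [← Algebra.TensorProduct.includeRight_apply, hd, mul_zero, map_zero]
  rwa [Algebra.TensorProduct.tmul_mul_tmul, mul_one, one_mul, tensorCoord_tmul, F.coord_gen,
    Algebra.smul_def, hD.mul_right_eq_zero] at h

variable (k : Type*) [Field k] [Algebra k H] [Algebra k Z] [IsScalarTower k Z H] [Algebra k D]
  [IsScalarTower k Z D] [Module.Finite k D]

lemma finite_tensorProduct : Module.Finite k (H ⊗[Z] D) := by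
  classical
  let f : (ι → D) →ₗ[k] H ⊗[Z] D :=
    LinearMap.lsum k (fun _ => D) k fun i => (TensorProduct.mk Z H D (F.gen i)).restrictScalars k
  refine Module.Finite.of_surjective f fun t => ?_
  obtain ⟨s, rfl⟩ := (F.bijective_denom_smul hD D).surjective t
  exact ⟨fun i => F.tensorCoord D i s, by simp [f, denom_smul_eq_sum_tmul]⟩

include k in
-- The coordinates of an element of the Jacobson radical are nilpotent, hence vanish.
theorem isSemisimpleRing_tensorProduct [Nonempty ι] [IsReduced D] :
    IsSemisimpleRing (H ⊗[Z] D) := by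
  have := F.finite_tensorProduct hD k
  have : IsArtinianRing (H ⊗[Z] D) := IsArtinianRing.of_finite k _
  rw [IsArtinianRing.isSemisimpleRing_iff_jacobson, eq_bot_iff]
  intro a ha
  obtain ⟨m, hm⟩ : IsNilpotent (Ring.jacobson (H ⊗[Z] D)) := IsSemiprimaryRing.isNilpotent
  refine F.eq_zero_of_tensorCoord_eq_zero (F.bijective_denom_smul hD D).injective fun i =>
    IsReduced.eq_zero _ ⟨m, F.includeRight_injective hD ?_⟩
  have hcoord : Algebra.TensorProduct.includeRight (F.tensorCoord D i a) ∈
      Ring.jacobson (H ⊗[Z] D) := by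
    rw [Algebra.TensorProduct.includeRight_apply, one_tmul_tensorCoord]
    exact Submodule.sum_mem _ fun j _ => Ideal.mul_mem_right _ _ (Ideal.mul_mem_left _ _ ha)
  have hpow := Ideal.pow_mem_pow hcoord m
  rwa [hm, ← map_pow, Ideal.zero_eq_bot, Ideal.mem_bot, ← map_zero
    (Algebra.TensorProduct.includeRight : D →ₐ[Z] H ⊗[Z] D)] at hpow

theorem exists_isSimpleModule_retraction [Nonempty ι] [IsReduced D] [Nontrivial D]
    (hZD : Function.Surjective (algebraMap Z D)) :
    ∃ V : Submodule H (H ⊗[Z] D), IsSimpleModule H V ∧ Module.Finite k V ∧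
      ∃ p : H ⊗[Z] D →ₗ[H] V, p ∘ₗ V.subtype = LinearMap.id := by
  have := F.finite_tensorProduct hD k
  have := F.isSemisimpleRing_tensorProduct hD k
  have := isSemisimpleModule_tensorProduct_of_surjective (H := H) hZD
  have := (F.includeRight_injective hD).nontrivial
  obtain ⟨V, hV⟩ := IsSemisimpleModule.exists_simple_submodule H (H ⊗[Z] D)
  obtain ⟨W, hVW⟩ := exists_isCompl V
  exact ⟨V, hV, Module.Finite.of_injective (V.subtype.restrictScalars k) V.subtype_injective,
    V.projectionOnto W hVW, Submodule.projectionOnto_comp_subtype hVW⟩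

end

lemma exists_isSimpleModule_finrank_dvd (k : Type*) [Field k] [Algebra k H] [Algebra k Z]
    [IsScalarTower k Z H] {E : Type*} [Field E] [Algebra Z E] [Algebra k E] [IsScalarTower k Z E]
    [Module.Finite k E] [Nonempty ι] (hE : IsUnit (algebraMap Z E F.denom))
    (hZE : Function.Surjective (algebraMap Z E)) :
    ∃ V : Submodule H (H ⊗[Z] E), IsSimpleModule H V ∧ Module.Finite k V ∧
      Module.finrank k E ∣ Module.finrank k V := by
  obtain ⟨V, hV, hVfin, -⟩ := F.exists_isSimpleModule_retraction hE k hZE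
  refine ⟨V, hV, hVfin, finrank_dvd_finrank_of_ker_smul_eq_zero hZE fun z hz v => ?_⟩
  have hz' : algebraMap Z E z = 0 := hz
  have htmul (t : H ⊗[Z] E) : z • t = 0 := by
    induction t with
    | zero => simp
    | add a b ha hb => rw [smul_add, ha, hb, add_zero]
    | tmul h d => rw [← tmul_smul, Algebra.smul_def, hz', zero_mul, tmul_zero]
  exact Subtype.ext (htmul v)

end AzumayaFrame

theorem AzumayaFrame.exists_isSimpleModule_hasProjectiveDimensionLT (k : Type*) [Field k]
    {Z C : Type v} {H : Type u} {ι : Type*} [CommRing Z] [Ring H] [Algebra Z H] [Fintype ι]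
    (F : AzumayaFrame Z H ι) [Nonempty ι] [Algebra k H] [Algebra k Z] [IsScalarTower k Z H]
    [CommRing C] [Algebra Z C] [Algebra k C] [IsScalarTower k Z C] (f : Z) [IsLocalization.Away f C]
    (hC : IsUnit (algebraMap Z C F.denom)) {rs : List C}
    (hrs : RingTheory.Sequence.IsWeaklyRegular C rs) [Module.Finite k (C ⧸ Ideal.ofList rs)]
    [IsReduced (C ⧸ Ideal.ofList rs)] [Nontrivial (C ⧸ Ideal.ofList rs)] :
    ∃ V : Submodule H (H ⊗[Z] (C ⧸ Ideal.ofList rs)), IsSimpleModule H V ∧ Module.Finite k V ∧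
      HasProjectiveDimensionLT (ModuleCat.of H V) (2 + rs.length) := by
  have hD : IsUnit (algebraMap Z (C ⧸ Ideal.ofList rs) F.denom) := by
    rw [IsScalarTower.algebraMap_apply Z C]
    exact hC.map _
  obtain ⟨V, hV, hVfin, p, hp⟩ := F.exists_isSimpleModule_retraction hD k
    (algebraMap_surjective_of_away k f (C := C) Ideal.Quotient.mk_surjective)
  let e : (C ⧸ (Ideal.ofList rs • ⊤ : Submodule C C)) ≃ₗ[C] (C ⧸ Ideal.ofList rs) :=
    Submodule.quotEquivOfEq _ _ (by simp)
  have hquot := F.hasProjectiveDimensionLT_quotient_of_isWeaklyRegular hC rs hrs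
    (hasProjectiveDimensionLT_tensorProduct_away C f)
  exact ⟨V, hV, hVfin, hasProjectiveDimensionLT_of_comp_eq_id V.subtype p hp
    (hasProjectiveDimensionLT_of_iso
      ((e.restrictScalars Z).baseChange Z H _ _).toModuleIso _)⟩

end Fibers

section FiniteType

namespace AzumayaFrame

variable {Z H ι : Type*} [CommRing Z] [Ring H] [Algebra Z H] [Fintype ι] (F : AzumayaFrame Z H ι)

lemma denom_mul_coord_mul (i : ι) (g h : H) :
    F.denom * F.coord i (g * h) = ∑ j, F.coord j g * F.coord i (F.gen j * h) := by
  rw [← smul_eq_mul, ← map_smul, ← smul_mul_assoc, F.denom_smul, Finset.sum_mul, map_sum]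
  simp_rw [smul_mul_assoc, map_smul, smul_eq_mul]

variable {k : Type*} [Field k] [Algebra k H] [Algebra k Z] [IsScalarTower k Z H] {A : Type*}
  [CommRing A] [Algebra Z A] [Algebra k A] [IsScalarTower k Z A]
  [IsLocalization.Away F.denom A]

section

variable {B : Subalgebra k A} (hinv : IsLocalization.Away.invSelf F.denom ∈ B)

include hinv

omit [Algebra k H] [Algebra k Z] [IsScalarTower k Z H] [IsScalarTower k Z A] in
lemma algebraMap_mem_of_denom_mul_mem {z : Z} (hz : algebraMap Z A (F.denom * z) ∈ B) :
    algebraMap Z A z ∈ B := by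
  have h := B.mul_mem hinv hz
  rwa [map_mul, ← mul_assoc, mul_comm (IsLocalization.Away.invSelf _),
    IsLocalization.Away.mul_invSelf, one_mul] at h

lemma algebraMap_coord_mem {S : Set H} (hone : ∀ i, algebraMap Z A (F.coord i 1) ∈ B)
    (hS : ∀ i j, ∀ s ∈ S, algebraMap Z A (F.coord i (F.gen j * s)) ∈ B) {h : H}
    (hh : h ∈ Algebra.adjoin k S) (i : ι) : algebraMap Z A (F.coord i h) ∈ B := by
  rw [← Subalgebra.mem_toSubmodule, Algebra.adjoin_eq_span] at hh
  induction hh using Submodule.span_induction generalizing i with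
  | zero => simp
  | add g h _ _ ihg ihh => simpa only [map_add] using B.add_mem (ihg i) (ihh i)
  | smul r h _ ih =>
    rw [← algebraMap_smul Z r h, map_smul, algebraMap_smul, Algebra.algebraMap_eq_smul_one,
      smul_assoc, ← Algebra.algebraMap_eq_smul_one]
    exact B.smul_mem (ih i) r
  | mem h hh =>
    induction hh using Submonoid.closure_induction_right generalizing i with
    | one => exact hone i
    | mul_right h _ s hs ih =>
      refine F.algebraMap_mem_of_denom_mul_mem hinv ?_
      rw [denom_mul_coord_mul, map_sum]
      refine B.sum_mem fun j _ => ?_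
      rw [map_mul]
      exact B.mul_mem (ih j) (hS i j s hs)

end

variable (k A) in
include F in
-- An analogue of the Artin–Tate lemma.
theorem finiteType_away [Nonempty ι] [Algebra.FiniteType k H] : Algebra.FiniteType k A := by
  obtain ⟨i⟩ := ‹Nonempty ι›
  obtain ⟨S, hS⟩ := ‹Algebra.FiniteType k H›.out
  let G : Set A := {IsLocalization.Away.invSelf F.denom} ∪
    (Set.range fun j => algebraMap Z A (F.coord j 1)) ∪
    (Set.range fun p : ι × ι × S => algebraMap Z A (F.coord p.1 (F.gen p.2.1 * p.2.2)))
  have hG : G.Finite :=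
    ((Set.finite_singleton _).union (Set.finite_range _)).union (Set.finite_range _)
  have hGB : G ⊆ Algebra.adjoin k G := Algebra.subset_adjoin
  have hinv : IsLocalization.Away.invSelf F.denom ∈ Algebra.adjoin k G := hGB (.inl (.inl rfl))
  have hcoord (h : H) (j : ι) : algebraMap Z A (F.coord j h) ∈ Algebra.adjoin k G :=
    F.algebraMap_coord_mem hinv (fun j => hGB (.inl (.inr ⟨j, rfl⟩)))
      (fun j l s hs => hGB (.inr ⟨(j, l, ⟨s, hs⟩), rfl⟩)) (hS ▸ Algebra.mem_top) j
  have hZ (z : Z) : algebraMap Z A z ∈ Algebra.adjoin k G := by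
    refine F.algebraMap_mem_of_denom_mul_mem hinv ?_
    rw [mul_comm, ← F.coord_gen i, ← smul_eq_mul, ← map_smul]
    exact hcoord _ i
  refine ⟨⟨hG.toFinset, ?_⟩⟩
  rw [hG.coe_toFinset, eq_top_iff]
  intro a _
  obtain ⟨n, z, ha⟩ := IsLocalization.Away.surj F.denom a
  have hmul : a = algebraMap Z A z * IsLocalization.Away.invSelf F.denom ^ n := by
    rw [← ha, mul_assoc, ← mul_pow, IsLocalization.Away.mul_invSelf, one_pow, mul_one]
  exact hmul ▸ mul_mem (hZ z) (pow_mem hinv n)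

end AzumayaFrame

end FiniteType

section ReducedRings

lemma exists_notMem_forall_mul_eq_zero_of_mem_minimalPrimes {A : Type*} [CommRing A]
    [IsNoetherianRing A] [IsReduced A] {p : Ideal A} (hp : p ∈ minimalPrimes A) :
    ∃ g ∉ p, ∀ x ∈ p, g * x = 0 := by
  classical
  have hfin := minimalPrimes.finite_of_isNoetherianRing A
  let others := hfin.toFinset.erase p
  have hothers : ¬ others.inf id ≤ p := fun hle => by
    obtain ⟨q, hq, hqp⟩ := (Ideal.IsPrime.inf_le' hp.1.1).1 hle
    rw [Finset.mem_erase, Set.Finite.mem_toFinset] at hq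
    exact hq.1 (le_antisymm hqp (hp.2 hq.2.1 hqp))
  obtain ⟨g, hg, hgp⟩ := SetLike.not_le_iff_exists.1 hothers
  refine ⟨g, hgp, fun x hx => ?_⟩
  rw [← Ideal.mem_bot, ← Ideal.zero_eq_bot, ← nilradical_eq_zero A, nilradical,
    ← Ideal.sInf_minimalPrimes, Ideal.mem_sInf]
  intro q hq
  by_cases hqp : q = p
  · exact hqp ▸ p.mul_mem_left _ hx
  · have hle : others.inf id ≤ q :=
      Finset.inf_le (f := id) (Finset.mem_erase.2 ⟨hqp, hfin.mem_toFinset.2 hq⟩)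
    exact q.mul_mem_right _ (hle hg)

theorem exists_isDomain_localizationAway (A : Type*) [CommRing A] [IsNoetherianRing A]
    [IsReduced A] [Nontrivial A] : ∃ g : A, IsDomain (Localization.Away g) := by
  obtain ⟨m, hm⟩ := Ideal.exists_maximal A
  obtain ⟨p, hp, -⟩ := Ideal.exists_minimalPrimes_le (I := ⊥) (J := m) bot_le
  have hprime : p.IsPrime := hp.1.1
  obtain ⟨g, hgp, hg⟩ := exists_notMem_forall_mul_eq_zero_of_mem_minimalPrimes hp
  refine ⟨g, ?_⟩
  have hmap : p.map (algebraMap A (Localization.Away g)) = ⊥ := by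
    rw [Ideal.map_eq_bot_iff_le_ker]
    exact fun x hx => (IsLocalization.map_eq_zero_iff (Submonoid.powers g) _ x).2
      ⟨⟨g, Submonoid.mem_powers g⟩, hg x hx⟩
  have : (⊥ : Ideal (Localization.Away g)).IsPrime := hmap ▸
    IsLocalization.isPrime_of_isPrime_disjoint (Submonoid.powers g) _ p hprime
      ((Ideal.disjoint_powers_iff_notMem_of_isPrime g).2 hgp)
  exact IsDomain.of_bot_isPrime _

end ReducedRings

section ResidueDegrees

open Polynomial

lemma exists_irreducible_dvd_natDegree_of_finite {k : Type*} [Field k] [Finite k] {n : ℕ}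
    (hn : n ≠ 0) {h : k[X]} (hh : h ≠ 0) :
    ∃ f : k[X], Irreducible f ∧ n ∣ f.natDegree ∧ ¬ f ∣ h := by
  let p := ringChar k
  have : Fact p.Prime := ⟨CharP.char_is_prime k p⟩
  let r := n * (h.natDegree + 1)
  have : NeZero r := ⟨mul_ne_zero hn (Nat.succ_ne_zero _)⟩
  have : Finite (FiniteField.Extension k p r) := Module.finite_of_finite k
  obtain ⟨a, ha⟩ := Field.exists_primitive_element k (FiniteField.Extension k p r)
  have hdeg : (minpoly k a).natDegree = r :=
    ((Field.primitive_element_iff_minpoly_natDegree_eq k a).1 ha).trans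
      (FiniteField.finrank_extension k p r)
  refine ⟨minpoly k a, minpoly.irreducible (Algebra.IsIntegral.isIntegral a),
    hdeg.symm ▸ Dvd.intro _ rfl, fun hdvd => ?_⟩
  have hle : r ≤ h.natDegree := hdeg ▸ natDegree_le_of_dvd hdvd hh
  have hlt : h.natDegree + 1 ≤ r := Nat.le_mul_of_pos_left _ (Nat.pos_of_ne_zero hn)
  lia

-- If `a` is not a `p`-th power, then all the polynomials `X ^ p - (a + b ^ p)` are irreducible.
lemma exists_irreducible_dvd_natDegree_of_not_perfectField {k : Type*} [Field k]
    (hk : ¬ PerfectField k) {h : k[X]} (hh : h ≠ 0) :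
    ∃ f : k[X], Irreducible f ∧ ringChar k ∣ f.natDegree ∧ ¬ f ∣ h := by
  classical
  let p := ringChar k
  have hp : p.Prime := (CharP.char_is_prime_or_zero k p).resolve_right fun hp => by
    have : CharP k 0 := hp ▸ ringChar.charP k
    have : CharZero k := CharP.charP_to_charZero k
    exact hk inferInstance
  have : ExpChar k p := ExpChar.prime hp
  have : Infinite k := not_finite_iff_infinite.1 fun _ => hk inferInstance
  have hfrob : ¬ Function.Surjective (frobenius k p) := fun hsurj => by
    have : PerfectRing k p := PerfectRing.ofSurjective k p hsurj
    exact hk (PerfectRing.toPerfectField k p)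
  obtain ⟨a, ha⟩ := not_forall.1 hfrob
  let f (b : k) : k[X] := X ^ p - C (a + b ^ p)
  have hirr (b : k) : Irreducible (f b) := X_pow_sub_C_irreducible_of_prime hp fun y hy =>
    ha ⟨y - b, by rw [frobenius_def, sub_pow_expChar, hy, add_sub_cancel_right]⟩
  have hinj : Function.Injective f := fun b b' hb =>
    frobenius_inj k p (add_left_cancel (C_injective (sub_right_injective hb)))
  by_contra! hdvd
  have hmem (b : k) : f b ∈ UniqueFactorizationMonoid.normalizedFactors h :=
    (Polynomial.mem_normalizedFactors_iff hh).2
      ⟨hirr b, monic_X_pow_sub_C _ hp.ne_zero, hdvd _ (hirr b) (by rw [natDegree_X_pow_sub_C])⟩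
  refine Set.infinite_range_of_injective hinj
    ((UniqueFactorizationMonoid.normalizedFactors h).toFinset.finite_toSet.subset ?_)
  rintro _ ⟨b, rfl⟩
  exact Multiset.mem_toFinset.2 (hmem b)

lemma exists_ne_zero_forall_exists_comap_eq {P C : Type*} [CommRing P] [IsDomain P] [CommRing C]
    [IsDomain C] [Algebra P C] [Algebra.HasGoingDown P C] [Algebra.FinitePresentation P C]
    (hinj : Function.Injective (algebraMap P C)) :
    ∃ h : P, h ≠ 0 ∧ ∀ q : Ideal P, q.IsPrime → h ∉ q →
      ∃ Q : Ideal C, Q.IsPrime ∧ Q.comap (algebraMap P C) = q := by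
  have hopen := PrimeSpectrum.isOpenMap_comap_of_hasGoingDown_of_finitePresentation
    (R := P) (S := C) _ isOpen_univ
  rw [Set.image_univ] at hopen
  have hbot : (⊥ : PrimeSpectrum P) ∈ Set.range (PrimeSpectrum.comap (algebraMap P C)) :=
    ⟨⊥, PrimeSpectrum.ext (Ideal.comap_bot_of_injective _ hinj)⟩
  obtain ⟨_, ⟨_, ⟨h, rfl⟩, rfl⟩, hh, hsub⟩ :=
    PrimeSpectrum.isBasis_basic_opens.exists_subset_of_mem_open hbot hopen
  refine ⟨h, fun h0 => hh (h0 ▸ Ideal.zero_mem _), fun q hq hhq => ?_⟩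
  obtain ⟨Q, hQ⟩ := hsub (show (⟨q, hq⟩ : PrimeSpectrum P) ∈ _ from hhq)
  exact ⟨Q.asIdeal, Q.isPrime, congrArg PrimeSpectrum.asIdeal hQ⟩

-- All but finitely many of the irreducible polynomials vanish at `t` modulo some maximal ideal.
lemma exists_isMaximal_dvd_finrank_of_transcendental {k B : Type*} [Field k] [CommRing B]
    [IsDomain B] [Algebra k B] [Algebra.FiniteType k B] {n : ℕ}
    (hirr : ∀ h : k[X], h ≠ 0 → ∃ f : k[X], Irreducible f ∧ n ∣ f.natDegree ∧ ¬ f ∣ h)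
    {t : B} (ht : Transcendental k t) :
    ∃ m : Ideal B, m.IsMaximal ∧ n ∣ Module.finrank k (B ⧸ m) := by
  let : Algebra k[X] B := (aeval t).toAlgebra
  have : IsScalarTower k k[X] B :=
    IsScalarTower.of_algebraMap_eq' (AlgHom.comp_algebraMap (aeval t)).symm
  have hinj : Function.Injective (algebraMap k[X] B) := transcendental_iff_injective.1 ht
  have : FaithfulSMul k[X] B := (faithfulSMul_iff_algebraMap_injective _ _).2 hinj
  have : Algebra.FiniteType k[X] B := .of_restrictScalars_finiteType k k[X] B
  have : Algebra.FinitePresentation k[X] B := Algebra.FinitePresentation.of_finiteType.1 this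
  obtain ⟨h, h0, hh⟩ := exists_ne_zero_forall_exists_comap_eq hinj
  obtain ⟨f, hf, hn, hfh⟩ := hirr h h0
  obtain ⟨Q, hQ, hQf⟩ := hh (Ideal.span {f})
    ((Ideal.span_singleton_prime hf.ne_zero).2 hf.prime) (by rwa [Ideal.mem_span_singleton])
  obtain ⟨m, hm, hQm⟩ := Ideal.exists_le_maximal Q hQ.ne_top
  have hfm : aeval t f ∈ m := by
    have hfQ : f ∈ Q.comap (algebraMap k[X] B) := hQf ▸ Ideal.mem_span_singleton_self f
    exact hQm hfQ
  refine ⟨m, hm, hn.trans ?_⟩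
  let : Field (B ⧸ m) := Ideal.Quotient.field m
  have : Module.Finite k (B ⧸ m) := finite_of_finite_type_of_isJacobsonRing k (B ⧸ m)
  let τ : B ⧸ m := Ideal.Quotient.mkₐ k m t
  have hroot : aeval τ f = 0 := by
    rw [aeval_algHom_apply]
    exact Ideal.Quotient.eq_zero_iff_mem.2 hfm
  have hdvd := minpoly.degree_dvd (K := k) (x := τ) (Algebra.IsIntegral.isIntegral _)
  rwa [← minpoly.eq_of_irreducible hf hroot,
    natDegree_mul_C (inv_ne_zero (leadingCoeff_ne_zero.2 hf.ne_zero))] at hdvd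

end ResidueDegrees

section CoordinateSequences

open MvPolynomial

lemma ofList_X_sub_C_eq_ker {k ι : Type*} [CommRing k] [DecidableEq ι] (a : ι → k) (l : List ι) :
    Ideal.ofList (l.map fun i => (X i - C (a i) : MvPolynomial ι k)) =
      RingHom.ker (aeval fun i => if i ∈ l then (C (a i) : MvPolynomial ι k) else X i) := by
  set I := Ideal.ofList (l.map fun i => (X i - C (a i) : MvPolynomial ι k))
  refine le_antisymm (Ideal.span_le.2 fun y hy => ?_) fun f hf => ?_
  · obtain ⟨i, hi, rfl⟩ := List.mem_map.1 hy
    rw [SetLike.mem_coe, RingHom.mem_ker, map_sub, aeval_X, if_pos hi, aeval_C]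
    exact sub_self _
  · have hmk : Ideal.Quotient.mkₐ k I = (Ideal.Quotient.mkₐ k I).comp
        (aeval fun i => if i ∈ l then C (a i) else X i) := by
      refine algHom_ext fun i => ?_
      rw [AlgHom.comp_apply, aeval_X]
      split_ifs with hi
      · exact Ideal.Quotient.eq.2 (Ideal.subset_span (List.mem_map.2 ⟨i, hi, rfl⟩))
      · rfl
    refine Ideal.Quotient.eq_zero_iff_mem.1 ((DFunLike.congr_fun hmk f).trans ?_)
    rw [AlgHom.comp_apply, RingHom.mem_ker.1 hf, map_zero]

lemma ofList_X_sub_C_eq_ker_aeval {k ι : Type*} [CommRing k] (a : ι → k) {l : List ι}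
    (hl : ∀ i, i ∈ l) :
    Ideal.ofList (l.map fun i => (X i - C (a i) : MvPolynomial ι k)) = RingHom.ker (aeval a) := by
  classical
  have hcomp : (aeval fun i => if i ∈ l then (C (a i) : MvPolynomial ι k) else X i) =
      (Algebra.ofId k _).comp (aeval a) :=
    algHom_ext fun i => by
      rw [aeval_X, if_pos (hl i), AlgHom.comp_apply, aeval_X]
      rfl
  ext f
  rw [ofList_X_sub_C_eq_ker, hcomp, RingHom.mem_ker, RingHom.mem_ker, AlgHom.comp_apply]
  exact map_eq_zero_iff _ (C_injective ι k)

lemma isWeaklyRegular_X_sub_C {k ι : Type*} [CommRing k] [IsDomain k] (a : ι → k) {l : List ι}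
    (hl : l.Nodup) : RingTheory.Sequence.IsWeaklyRegular (MvPolynomial ι k)
      (l.map fun i => (X i - C (a i) : MvPolynomial ι k)) := by
  classical
  induction l using List.reverseRecOn with
  | nil => exact RingTheory.Sequence.IsWeaklyRegular.nil _ _
  | append_singleton l j ih =>
    have hj : j ∉ l := fun hj => List.disjoint_of_nodup_append hl hj (List.mem_singleton_self j)
    rw [List.map_append, RingTheory.Sequence.isWeaklyRegular_append_iff]
    refine ⟨ih hl.of_append_left, ?_⟩
    rw [List.map_singleton, RingTheory.Sequence.isWeaklyRegular_singleton_iff,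
      isSMulRegular_iff_right_eq_zero_of_smul]
    intro y hy
    obtain ⟨f, rfl⟩ := Submodule.Quotient.mk_surjective _ y
    rw [← Submodule.Quotient.mk_smul] at hy
    rw [Submodule.Quotient.mk_eq_zero, smul_eq_mul, Ideal.mul_top, ofList_X_sub_C_eq_ker,
      RingHom.mem_ker] at hy ⊢
    rw [smul_eq_mul, map_mul, map_sub, aeval_X, if_neg hj, aeval_C] at hy
    refine (mul_eq_zero.1 hy).resolve_left fun h0 => one_ne_zero (α := k) ?_
    simpa only [algebraMap_eq, map_sub, eval_X, eval_C, map_zero, add_sub_cancel_left] using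
      congrArg (eval fun i => a i + 1) h0

end CoordinateSequences

section FiniteReducedSections

open RingTheory.Sequence

/-- A weakly regular sequence in a `k`-algebra `C` that cuts out a nonempty, finite and reduced
subscheme of `Spec C`. -/
structure IsFiniteReducedSection (k : Type*) {C : Type*} [Field k] [CommRing C] [Algebra k C]
    (rs : List C) : Prop where
  isWeaklyRegular : IsWeaklyRegular C rs
  finite : Module.Finite k (C ⧸ Ideal.ofList rs)
  isReduced : IsReduced (C ⧸ Ideal.ofList rs)
  nontrivial : Nontrivial (C ⧸ Ideal.ofList rs)

/-- Some basic open subset of `Spec A` has a finite reduced section. Its coordinate ring `C` is an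
arbitrary model of the localization, so that the property passes from a localization of `A` to `A`
without transport along isomorphisms. -/
def HasFiniteReducedSection (k : Type u') (A : Type u) [Field k] [CommRing A] [Algebra k A] :
    Prop :=
  ∃ (g : A) (C : Type u) (_ : CommRing C) (_ : Algebra A C) (_ : IsLocalization.Away g C)
    (_ : Algebra k C) (_ : IsScalarTower k A C) (rs : List C), IsFiniteReducedSection k rs

lemma exists_isLocalization_away_mul {A B C : Type*} [CommRing A] [CommRing B] [CommRing C]
    [Algebra A B] [Algebra B C] [Algebra A C] [IsScalarTower A B C] (b : A)
    [IsLocalization.Away b B] (g : B) [IsLocalization.Away g C] :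
    ∃ y : A, IsLocalization.Away (b * y) C := by
  obtain ⟨n, y, hy⟩ := IsLocalization.Away.surj b g
  have hb : IsUnit (algebraMap A B b) := IsLocalization.Away.algebraMap_isUnit b
  have hyg : Associated (algebraMap A B y) g :=
    hy ▸ (associated_mul_isUnit_left_iff (hb.pow n)).2 (Associated.refl g)
  exact ⟨y, IsLocalization.Away.mul_of_associated b y g hyg⟩

variable {k : Type u'} [Field k]

lemma HasFiniteReducedSection.of_away {A B : Type u} [CommRing A] [Algebra k A] [CommRing B]
    [Algebra k B] [Algebra A B] [IsScalarTower k A B] (b : A) [IsLocalization.Away b B]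
    (hB : HasFiniteReducedSection k B) : HasFiniteReducedSection k A := by
  obtain ⟨g, C, _, _, _, _, _, rs, hrs⟩ := hB
  let : Algebra A C := Algebra.compHom C (algebraMap A B)
  have : IsScalarTower A B C := IsScalarTower.of_algebraMap_eq fun _ => rfl
  have : IsScalarTower k A C := .to₁₂₄ k A B C
  obtain ⟨y, hy⟩ := exists_isLocalization_away_mul b g (C := C)
  exact ⟨b * y, C, _, _, hy, _, inferInstance, rs, hrs⟩

lemma isFiniteReducedSection_map_of_etale {P C : Type*} [CommRing P] [CommRing C] [Algebra k P]
    [Algebra k C] [Algebra P C] [IsScalarTower k P C] [Algebra.Etale P C] {rs : List P}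
    (hrs : IsWeaklyRegular P rs) (hmax : (Ideal.ofList rs).IsMaximal)
    [Module.Finite k (P ⧸ Ideal.ofList rs)] {Q : Ideal C} (hQ : Q ≠ ⊤)
    (hrsQ : Ideal.ofList rs ≤ Q.comap (algebraMap P C)) :
    IsFiniteReducedSection k (rs.map (algebraMap P C)) := by
  let I := Ideal.ofList rs
  let J := I.map (algebraMap P C)
  have hJ : Ideal.ofList (rs.map (algebraMap P C)) = J := (Ideal.map_ofList _ _).symm
  let : Field (P ⧸ I) := Ideal.Quotient.field I
  have : IsScalarTower k (P ⧸ I) (C ⧸ J) := by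
    refine IsScalarTower.of_algebraMap_eq fun r => ?_
    change Ideal.Quotient.mk J (algebraMap k C r) =
      Ideal.Quotient.mk J (algebraMap P C (algebraMap k P r))
    rw [← IsScalarTower.algebraMap_apply]
  have : Module.Finite (P ⧸ I) (C ⧸ J) := Algebra.FormallyUnramified.finite_of_free _ _
  refine ⟨hrs.of_flat, ?_, ?_, ?_⟩
  · exact hJ ▸ Module.Finite.trans (P ⧸ I) (C ⧸ J)
  · exact hJ ▸ Algebra.FormallyUnramified.isReduced_of_field (P ⧸ I) (C ⧸ J)
  · exact hJ ▸ Ideal.Quotient.nontrivial_iff.2 fun htop =>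
      hQ (eq_top_iff.2 (htop ▸ Ideal.map_le_iff_le_comap.2 hrsQ))

-- The section is the fibre over a general rational point of affine space.
lemma exists_isFiniteReducedSection_of_etale [Infinite k] {ι C : Type*} [Finite ι] [CommRing C]
    [IsDomain C] [Algebra k C] [Algebra (MvPolynomial ι k) C]
    [IsScalarTower k (MvPolynomial ι k) C] [Algebra.Etale (MvPolynomial ι k) C] :
    ∃ rs : List C, IsFiniteReducedSection k rs := by
  have := Fintype.ofFinite ι
  let P := MvPolynomial ι k
  obtain ⟨h, h0, hh⟩ := exists_ne_zero_forall_exists_comap_eq (P := P) (C := C)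
    (FaithfulSMul.algebraMap_injective P C)
  obtain ⟨a, ha⟩ : ∃ a : ι → k, MvPolynomial.eval a h ≠ 0 := by
    by_contra! hzero
    exact h0 (MvPolynomial.funext fun a => by rw [hzero a, map_zero])
  let L : List P := (Finset.univ : Finset ι).toList.map fun i => .X i - .C (a i)
  have hL : Ideal.ofList L = RingHom.ker (MvPolynomial.aeval a : P →ₐ[k] k) :=
    ofList_X_sub_C_eq_ker_aeval a fun i => Finset.mem_toList.2 (Finset.mem_univ i)
  have hsurj : Function.Surjective (MvPolynomial.aeval a : P →ₐ[k] k) := fun r =>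
    ⟨.C r, MvPolynomial.aeval_C a r⟩
  have hmax : (Ideal.ofList L).IsMaximal := hL ▸ RingHom.ker_isMaximal_of_surjective _ hsurj
  have : Module.Finite k (P ⧸ Ideal.ofList L) := hL ▸
    Module.Finite.equiv (Ideal.quotientKerAlgEquivOfSurjective hsurj).symm.toLinearEquiv
  have hhL : h ∉ Ideal.ofList L := by rwa [hL, RingHom.mem_ker, MvPolynomial.aeval_eq_eval]
  obtain ⟨Q, hQ, hQL⟩ := hh _ hmax.isPrime hhL
  exact ⟨_, isFiniteReducedSection_map_of_etale (isWeaklyRegular_X_sub_C a (Finset.nodup_toList _))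
    hmax hQ.ne_top hQL.ge⟩

variable {B : Type u} [CommRing B] [IsDomain B] [Algebra k B] [Algebra.FiniteType k B]

-- Over a perfect field the generic point of an integral variety is smooth.
lemma hasFiniteReducedSection_of_perfectField [PerfectField k] [Infinite k] :
    HasFiniteReducedSection k B := by
  have : Algebra.FinitePresentation k B := Algebra.FinitePresentation.of_finiteType.1 inferInstance
  have : Algebra.EssFiniteType k (FractionRing B) :=
    have := Algebra.EssFiniteType.of_isLocalization (FractionRing B) (nonZeroDivisors B)
    .comp k B (FractionRing B)
  have : Algebra.IsSmoothAt k (⊥ : Ideal B) := by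
    change Algebra.FormallySmooth k (Localization (⊥ : Ideal B).primeCompl)
    rw [Ideal.primeCompl_bot]
    exact Algebra.FormallySmooth.of_perfectField (K := k) (L := FractionRing B)
  obtain ⟨f, hf, n, _, _, _⟩ :=
    Algebra.IsSmoothAt.exists_isStandardEtale_mvPolynomial (R := k) (p := (⊥ : Ideal B))
  have : IsDomain (Localization.Away f) :=
    IsLocalization.isDomain_localization (powers_le_nonZeroDivisors_of_noZeroDivisors hf)
  obtain ⟨rs, hrs⟩ := exists_isFiniteReducedSection_of_etale (k := k) (ι := Fin n)
    (C := Localization.Away f)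
  exact ⟨f, _, _, _, inferInstance, _, inferInstance, rs, hrs⟩

lemma hasFiniteReducedSection_of_isDomain
    (hres : ∀ m : Ideal B, m.IsMaximal → ¬ ringChar k ∣ Module.finrank k (B ⧸ m)) :
    HasFiniteReducedSection k B := by
  by_cases hk : PerfectField k ∧ Infinite k
  · obtain ⟨_, _⟩ := hk
    exact hasFiniteReducedSection_of_perfectField
  have hirr (h : Polynomial k) (hh : h ≠ 0) :
      ∃ f : Polynomial k, Irreducible f ∧ ringChar k ∣ f.natDegree ∧ ¬ f ∣ h := by
    rcases not_and_or.1 hk with hk | hk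
    · exact exists_irreducible_dvd_natDegree_of_not_perfectField hk hh
    · have := not_infinite_iff_finite.1 hk
      exact exists_irreducible_dvd_natDegree_of_finite (CharP.ringChar_ne_zero_of_finite k) hh
  have : Algebra.IsAlgebraic k B := ⟨fun t => by
    by_contra ht
    obtain ⟨m, hm, hdvd⟩ := exists_isMaximal_dvd_finrank_of_transcendental hirr ht
    exact hres m hm hdvd⟩
  have : Algebra.IsIntegral k B := Algebra.isAlgebraic_iff_isIntegral.1 inferInstance
  have : Module.Finite k B := Algebra.IsIntegral.finite
  have : IsLocalization.Away (1 : B) B :=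
    IsLocalization.away_of_isUnit_of_bijective B isUnit_one Function.bijective_id
  let e : (B ⧸ Ideal.ofList ([] : List B)) ≃+* B :=
    (Ideal.quotEquivOfEq Ideal.ofList_nil).trans (RingEquiv.quotientBot B)
  exact ⟨1, B, _, _, this, _, inferInstance, [], .nil _ _, inferInstance,
    isReduced_of_injective e.toRingHom e.injective, e.toEquiv.nontrivial⟩

theorem hasFiniteReducedSection {A : Type u} [CommRing A] [IsReduced A] [Nontrivial A]
    [Algebra k A] [Algebra.FiniteType k A]
    (hres : ∀ m : Ideal A, m.IsMaximal → ¬ ringChar k ∣ Module.finrank k (A ⧸ m)) :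
    HasFiniteReducedSection k A := by
  have : IsNoetherianRing A := Algebra.FiniteType.isNoetherianRing k A
  obtain ⟨g, hg⟩ := exists_isDomain_localizationAway A
  have : Algebra.FinitePresentation k A := Algebra.FinitePresentation.of_finiteType.1 inferInstance
  have : Algebra.FinitePresentation k (Localization.Away g) := .of_isLocalizationAway g
  refine .of_away (B := Localization.Away g) g
    (hasFiniteReducedSection_of_isDomain fun m hm hdvd => ?_)
  let : Field (Localization.Away g ⧸ m) := Ideal.Quotient.field m
  have : Module.Finite k (Localization.Away g ⧸ m) :=
    finite_of_finite_type_of_isJacobsonRing k (Localization.Away g ⧸ m)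
  have hsurj : Function.Surjective (IsScalarTower.toAlgHom k A (Localization.Away g ⧸ m)) :=
    algebraMap_surjective_of_away k (C := Localization.Away g) g Ideal.Quotient.mk_surjective
  refine hres _ (RingHom.ker_isMaximal_of_surjective _ hsurj) ?_
  rwa [(Ideal.quotientKerAlgEquivOfSurjective hsurj).toLinearEquiv.finrank_eq]

end FiniteReducedSections

section Regularity

variable {k : Type u'} [Field k] {H : Type u} [Ring H]

lemma IsSemiprimeRing.isReduced_center [Algebra k H] (hH : IsSemiprimeRing H) :
    IsReduced (Subalgebra.center k H) := by
  rw [isReduced_iff_pow_one_lt 2 one_lt_two]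
  refine fun z hz => Subtype.ext (hH z fun x => ?_)
  have hz2 : (z : H) * z = 0 := congrArg Subtype.val (pow_two z ▸ hz)
  rw [← Subalgebra.mem_center_iff.1 z.2 x, mul_assoc, hz2, mul_zero]

theorem AzumayaFrame.exists_isSimpleModule_hasProjectiveDimensionLT_of_not_dvd {Z : Type u}
    {ι : Type*} [CommRing Z] [IsReduced Z] [Algebra k Z] [Algebra k H] [Algebra Z H]
    [IsScalarTower k Z H] [Fintype ι] [Nonempty ι] [IsNoetherianRing H] [Algebra.FiniteType k H]
    (F : AzumayaFrame Z H ι) (hF : F.denom ≠ 0)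
    (hirr : ∀ (M : Type u) [AddCommGroup M] [Module H M] [Module k M] [IsScalarTower k H M],
      IsSimpleModule H M → FiniteDimensional k M → ¬ ringChar k ∣ Module.finrank k M) :
    ∃ (V : Type u) (_ : AddCommGroup V) (_ : Module H V) (_ : Module k V)
      (_ : IsScalarTower k H V) (n : ℕ), IsSimpleModule H V ∧ FiniteDimensional k V ∧
        HasProjectiveDimensionLT (ModuleCat.of H V) (n + 1) := by
  let A := Localization.Away F.denom
  have : IsReduced A := isReduced_localizationPreserves (Submonoid.powers F.denom) A inferInstance
  have : Nontrivial A := by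
    rw [← not_subsingleton_iff_nontrivial,
      IsLocalization.subsingleton_iff (M := Submonoid.powers F.denom)]
    rintro ⟨n, hn⟩
    exact hF (eq_zero_of_pow_eq_zero hn)
  have : Algebra.FiniteType k A := F.finiteType_away k A
  obtain ⟨g, C, _, _, _, _, _, rs, hrs⟩ := hasFiniteReducedSection (k := k) (A := A) fun m hm => by
    let : Field (A ⧸ m) := Ideal.Quotient.field m
    have : Module.Finite k (A ⧸ m) := finite_of_finite_type_of_isJacobsonRing k (A ⧸ m)
    have hdenom : IsUnit (algebraMap Z (A ⧸ m) F.denom) := by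
      rw [IsScalarTower.algebraMap_apply Z A]
      exact (IsLocalization.Away.algebraMap_isUnit F.denom).map _
    obtain ⟨V, hV, hfin, hdvd⟩ := F.exists_isSimpleModule_finrank_dvd k (E := A ⧸ m) hdenom
      (algebraMap_surjective_of_away k (C := A) F.denom Ideal.Quotient.mk_surjective)
    exact fun h => hirr V hV hfin (h.trans hdvd)
  let : Algebra Z C := Algebra.compHom C (algebraMap Z A)
  have : IsScalarTower Z A C := IsScalarTower.of_algebraMap_eq fun _ => rfl
  have : IsScalarTower k Z C := .to₁₂₄ k Z A C
  obtain ⟨y, hy⟩ := exists_isLocalization_away_mul F.denom g (C := C)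
  have hdenom : IsUnit (algebraMap Z C F.denom) := by
    rw [IsScalarTower.algebraMap_apply Z A]
    exact (IsLocalization.Away.algebraMap_isUnit F.denom).map _
  obtain ⟨hreg, _, _, _⟩ := hrs
  obtain ⟨V, hV, hfin, hpd⟩ :=
    F.exists_isSimpleModule_hasProjectiveDimensionLT k (F.denom * y) hdenom hreg
  exact ⟨V, _, _, _, inferInstance, 1 + rs.length, hV, hfin, by rwa [add_right_comm]⟩

theorem exists_isSimpleModule_hasProjectiveDimensionLT [Algebra k H] [Nontrivial H]
    [IsNoetherianRing H] [Algebra.FiniteType k H] (hPI : SatisfiesPolynomialIdentity k H)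
    (hH : IsSemiprimeRing H)
    (hirr : ∀ (M : Type u) [AddCommGroup M] [Module H M] [Module k M] [IsScalarTower k H M],
      IsSimpleModule H M → FiniteDimensional k M → ¬ ringChar k ∣ Module.finrank k M) :
    ∃ (V : Type u) (_ : AddCommGroup V) (_ : Module H V) (_ : Module k V)
      (_ : IsScalarTower k H V) (n : ℕ), IsSimpleModule H V ∧ FiniteDimensional k V ∧
        HasProjectiveDimensionLT (ModuleCat.of H V) (n + 1) := by
  obtain ⟨d, α, hα1, hα⟩ := exists_multilinearPolynomial_eq_zero hPI
  obtain ⟨N, F, hF⟩ := exists_azumayaFrame hH hα1 hα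
  have : Nonempty (Fin N) := by
    by_contra hN
    rw [not_nonempty_iff] at hN
    refine hF (Subtype.ext ?_)
    simpa [Algebra.smul_def] using F.denom_smul 1
  have : IsReduced (Subalgebra.center k H) := hH.isReduced_center
  exact F.exists_isSimpleModule_hasProjectiveDimensionLT_of_not_dvd hF hirr

theorem hasFiniteGlobalDimension_of_finrank_ne_zero [HopfAlgebra k H]
    (hS : ∀ h : H, HopfAlgebra.antipode k (HopfAlgebra.antipode k h) = h)
    {V : Type u} [AddCommGroup V] [Module k V] [Module H V] [IsScalarTower k H V]
    [FiniteDimensional k V] (hV : (Module.finrank k V : k) ≠ 0) {n : ℕ}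
    (hn : HasProjectiveDimensionLT (ModuleCat.of H V) (n + 1)) : HasFiniteGlobalDimension H := by
  refine ⟨n, fun M N _ _ _ _ i hi => ?_⟩
  let X := ULift.{max u u'} M
  let : Module k X := Module.compHom X (algebraMap k H)
  have : IsScalarTower k H X := .of_algebraMap_smul fun _ _ => rfl
  have hX : HasProjectiveDimensionLE (ModuleCat.of H X) n :=
    hasProjectiveDimensionLT_of_finrank_ne_zero hS hV hn X
  let e : X ≃ₗ[H] ULift.{u} M := ULift.moduleEquiv.trans ULift.moduleEquiv.symm
  have hM : HasProjectiveDimensionLE (ModuleCat.of H (ULift.{u} M)) n :=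
    ModuleCat.hasProjectiveDimensionLE_of_linearEquiv (M := ModuleCat.of H X) e n
  exact HasProjectiveDimensionLT.subsingleton _ (n + 1) i hi _

end Regularity

theorem regular_of_involutory_semiprime_PI_hopf
    (k : Type u') [Field k] (H : Type u) [Ring H] [HopfAlgebra k H]
    (haff : Algebra.FiniteType k H)
    (hnoeth : IsNoetherianRing H) (hnoeth' : IsNoetherianRing Hᵐᵒᵖ)
    (hPI : SatisfiesPolynomialIdentity k H)
    (hinv : ∀ h : H, HopfAlgebra.antipode (R := k) (HopfAlgebra.antipode (R := k) h) = h)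
    (hsemiprime : IsSemiprimeRing H)
    (hirr : ∀ (M : Type u) [AddCommGroup M] [Module H M] [Module k M]
      [IsScalarTower k H M], IsSimpleModule H M → FiniteDimensional k M →
        ¬ ((ringChar k : ℕ) ∣ Module.finrank k M)) :
    HasFiniteGlobalDimension H := by
  have : Nontrivial H := (Bialgebra.counitAlgHom k H).toRingHom.domain_nontrivial
  obtain ⟨V, _, _, _, _, n, hsimple, hfin, hpd⟩ :=
    exists_isSimpleModule_hasProjectiveDimensionLT (k := k) hPI hsemiprime hirr
  have hrank : (Module.finrank k V : k) ≠ 0 := fun h =>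
    hirr V hsimple hfin ((ringChar.spec k _).1 h)
  exact hasFiniteGlobalDimension_of_finrank_ne_zero hinv hrank hpd
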